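/- If there exists a recoverable wait-free binary consensus algorithm for n > 1 processes using objects of deterministic readable types 𝒯_0, 𝒯_1, 𝒯_2, … together with registers, then at least one of the types 𝒯_i has recoverable consensus number at least n; that is, the recoverable consensus hierarchy is robust for deterministic readable types. -/

import Mathlib

/-!
The proof characterizes solvability by `n`-recording objects: an object value `u`, two teams of
processes and one operation per process such that the value reached from `u` by letting each process
apply its operation at most once records the team of the first process, and such that `u` itself can
be restored only against a team consisting of a single process.

*Necessity* (`exists_recording`). Call an execution budgeted if in each of its prefixes each process
crashes at most twice per step of a process with smaller index. A bivalent execution has a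
critical extension with respect to budgeted extensions, because an infinite budgeted execution leaves
the lowest process with infinitely many steps only finitely many crashes, so that it has to decide.
In a critical configuration all processes are poised at the same object, and the valencies of their
steps define two teams. If this object is not `n`-recording, some schedule of single steps followed
by a crash of all processes from some index `K` on leads to an execution that is bivalent again
(`next_stage`) although the processes from `K` on are univalent by themselves. Iterating this gives an
infinite execution without decisions; as `K` drops as long as only processes from `K` on take
part, beyond the limit inferior of these indices there is again a process with infinitely many steps
and finitely many crashes, a contradiction. Registers are never `n`-recording
(`not_recording_register`), so an `n`-recording object has one of the types `T k`.

*Sufficiency* (`exists_setup`, `Setup.recConsensusNumberGe`). With a readable `n`-recording type, two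
teams, each of which agrees internally on a value, reach consensus: announce the value of the team in a
register, read the object, apply the recording operation only if the object still has the value `u`,
read again and adopt the value of the recorded team. If `u` itself records the opposite team, the
process, which is then alone in its team, first checks whether the opposite team has announced a
value, and if so adopts it. A recovering process may repeat all this, since it applies its
operation only after reading the value `u`. Arranging the teams in a binary tree, so that any two
processes are separated at some node, yields consensus among all processes: a process ascends from its
leaf to the root. The invariant is `Setup.Good`.
-/

namespace RecoverableConsensus

/-- A deterministic object type: a set of values, operations and responses together with a
transition function assigning to each (value, operation) pair a unique response and a unique
resulting value. -/
structure DetType : Type 1 where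
  Value : Type
  Op : Type
  Resp : Type
  δ : Value → Op → Resp × Value

/-- A type is readable if it has a Read operation that returns (an injective encoding of)
the current value of the object without changing it. -/
def Readable (T : DetType) : Prop :=
  ∃ (read : T.Op) (ι : T.Value → T.Resp),
    Function.Injective ι ∧ ∀ v, T.δ v read = (ι v, v)

/-- The register type over the value set `V`: the operation `none` is Read (returning the
current value without changing it) and `some v` is Write(v) (changing the value to `v`). -/
def RegisterType (V : Type) : DetType where
  Value := V
  Op := Option V
  Resp := V
  δ := fun u op =>
    match op with
    | none => (u, u)
    | some v => (v, v)

def IsRegister (T : DetType) : Prop := ∃ V : Type, T = RegisterType V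

/-- An event is either a step by a process or a crash of a process. -/
inductive Event (n : ℕ) : Type where
  | step : Fin n → Event n
  | crash : Fin n → Event n
deriving DecidableEq

/-- An algorithm for `n` processes: a collection of shared objects, each with a deterministic
type and an initial value, and for each process a deterministic state machine with an initial
state depending on the process's binary input.  Each state determines the process's next step
(`pending`: an operation applied to a designated object, or `none` for a no-op); the state
reached after a step is determined by the current state and the response received (`next`).
`output i s = some v` means that `s` is an output state of process `i` for the value `v`;
processes in output states take only no-op steps. -/
structure Algorithm (n : ℕ) : Type 1 where
  ObjIdx : Type
  objType : ObjIdx → DetType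
  objInit : (o : ObjIdx) → (objType o).Value
  PState : Fin n → Type
  init : (i : Fin n) → Bool → PState i
  pending : (i : Fin n) → PState i → Option ((o : ObjIdx) × (objType o).Op)
  next : (i : Fin n) → PState i → (o : ObjIdx) → (objType o).Resp → PState i
  output : (i : Fin n) → PState i → Option Bool
  output_noop : ∀ i s, output i s ≠ none → pending i s = none

/-- A configuration assigns a state to each process and a value to each object. -/
structure Config {n : ℕ} (A : Algorithm n) : Type where
  pstate : (i : Fin n) → A.PState i
  oval : (o : A.ObjIdx) → (A.objType o).Value

variable {n : ℕ}

/-- The effect of one event on a configuration.  A crash of `p_i` resets `p_i` to its initial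
state (for its input) and leaves all object values unchanged; a step of `p_i` applies its
pending operation (if any) to the designated object, receiving the response determined by the
type's transition function. -/
noncomputable def applyEvent (A : Algorithm n) (input : Fin n → Bool) (C : Config A) :
    Event n → Config A
  | .crash i => { C with pstate := Function.update C.pstate i (A.init i (input i)) }
  | .step i =>
    letI : DecidableEq A.ObjIdx := Classical.decEq _
    match A.pending i (C.pstate i) with
    | none => C
    | some ⟨o, op⟩ =>
      { pstate := Function.update C.pstate i
          (A.next i (C.pstate i) o ((A.objType o).δ (C.oval o) op).1),
        oval := Function.update C.oval o ((A.objType o).δ (C.oval o) op).2 }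

/-- Since the algorithm is deterministic, a finite execution from `C` is determined by its
schedule, i.e. its list of events; `run A input C σ` is the configuration `Cσ` reached by
applying the events of `σ` in order from `C`. -/
noncomputable def run (A : Algorithm n) (input : Fin n → Bool) (C : Config A) :
    List (Event n) → Config A
  | [] => C
  | e :: σ => run A input (applyEvent A input C e) σ

/-- The initial configuration: every process in its initial state, every object at its
initial value. -/
def initConfig (A : Algorithm n) (input : Fin n → Bool) : Config A :=
  ⟨fun i => A.init i (input i), A.objInit⟩

/-- Process `i` has decided `v` in `Cσ`: at some point along the execution `σ` from `C`,
process `i` was in an output state for `v`. -/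
def HasDecided (A : Algorithm n) (input : Fin n → Bool) (C : Config A)
    (σ : List (Event n)) (i : Fin n) (v : Bool) : Prop :=
  ∃ τ, τ <+: σ ∧ A.output i ((run A input C τ).pstate i) = some v

def CrashFree (σ : List (Event n)) : Prop := ∀ i : Fin n, Event.crash i ∉ σ

/-- The first `k` events of an infinite execution. -/
def initSeg (e : ℕ → Event n) (k : ℕ) : List (Event n) := (List.range k).map e

/-- Agreement: in every execution no two processes decide different values. -/
def Agreement (A : Algorithm n) : Prop :=
  ∀ (input : Fin n → Bool) (σ : List (Event n)) (i j : Fin n) (v w : Bool),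
    HasDecided A input (initConfig A input) σ i v →
    HasDecided A input (initConfig A input) σ j w → v = w

/-- Validity: every decided value is the input of some process. -/
def Validity (A : Algorithm n) : Prop :=
  ∀ (input : Fin n → Bool) (σ : List (Event n)) (i : Fin n) (v : Bool),
    HasDecided A input (initConfig A input) σ i v → ∃ j, input j = v

/-- Recoverable wait-freedom: every process, starting from its initial state, either crashes
or decides within a finite number of its own steps.  Equivalently: in every infinite execution
in which process `i` starts at (or is reset by a crash to) its initial state, takes infinitely
many steps and crashes only finitely often, it eventually reaches an output state. -/
def RecWaitFree (A : Algorithm n) : Prop :=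
  ∀ (input : Fin n → Bool) (C : Config A) (e : ℕ → Event n) (i : Fin n),
    (C.pstate i = A.init i (input i) ∨ ∃ k, e k = Event.crash i) →
    (∀ m, ∃ k, m ≤ k ∧ e k = Event.step i) →
    (∃ m, ∀ k, m ≤ k → e k ≠ Event.crash i) →
    ∃ (k : ℕ) (v : Bool), A.output i ((run A input C (initSeg e k)).pstate i) = some v

/-- A recoverable wait-free binary consensus algorithm. -/
def SolvesRecConsensus (A : Algorithm n) : Prop :=
  Agreement A ∧ Validity A ∧ RecWaitFree A

/-- Agreement restricted to crash-free executions. -/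
def AgreementCF (A : Algorithm n) : Prop :=
  ∀ (input : Fin n → Bool) (σ : List (Event n)), CrashFree σ →
    ∀ (i j : Fin n) (v w : Bool),
      HasDecided A input (initConfig A input) σ i v →
      HasDecided A input (initConfig A input) σ j w → v = w

/-- Validity restricted to crash-free executions. -/
def ValidityCF (A : Algorithm n) : Prop :=
  ∀ (input : Fin n → Bool) (σ : List (Event n)), CrashFree σ →
    ∀ (i : Fin n) (v : Bool),
      HasDecided A input (initConfig A input) σ i v → ∃ j, input j = v

/-- Wait-freedom: in crash-free executions, every process that takes infinitely many steps
decides. -/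
def WaitFree (A : Algorithm n) : Prop :=
  ∀ (input : Fin n → Bool) (e : ℕ → Event n),
    (∀ (k : ℕ) (i : Fin n), e k ≠ Event.crash i) →
    ∀ i : Fin n, (∀ m, ∃ k, m ≤ k ∧ e k = Event.step i) →
    ∃ (k : ℕ) (v : Bool),
      A.output i ((run A input (initConfig A input) (initSeg e k)).pstate i) = some v

/-- A wait-free binary consensus algorithm (for the model in which crashes are permanent,
i.e. only crash-free executions are relevant). -/
def SolvesWFConsensus (A : Algorithm n) : Prop :=
  AgreementCF A ∧ ValidityCF A ∧ WaitFree A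

/-- The number of crashes of process `i` in `σ`. -/
def crashCount (i : Fin n) (σ : List (Event n)) : ℕ :=
  (σ.filter fun e => decide (e = Event.crash i)).length

def isStepBelow (i : Fin n) : Event n → Bool
  | .step j => decide (j < i)
  | .crash _ => false

/-- The total number of steps taken by processes `p_0, …, p_{i-1}` in `σ`. -/
def stepsBelow (i : Fin n) (σ : List (Event n)) : ℕ := (σ.filter (isStepBelow i)).length

/-- The crash bound: for every process `p_i`, the number of crashes of `p_i` is at most
`z·n` times the total number of steps of `p_0, …, p_{i-1}` (for `i = 0` this says that `p_0`
never crashes). -/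
def EMem (z : ℕ) (σ : List (Event n)) : Prop :=
  ∀ i : Fin n, crashCount i σ ≤ z * n * stepsBelow i σ

/-- `𝓔_z`: executions satisfying the crash bound. -/
def ESet (n z : ℕ) : Set (List (Event n)) := { σ | EMem z σ }

/-- `𝓔*_z`: executions satisfying the crash bound in every prefix. -/
def EStarSet (n z : ℕ) : Set (List (Event n)) := { σ | ∀ τ, τ <+: σ → EMem z τ }

/-- `e` is an event by a process in `P`. -/
def eventBy (P : Set (Fin n)) : Event n → Prop
  | .step i => i ∈ P
  | .crash i => i ∈ P

/-- The set of processes `P` is `v`-univalent in the execution `α` from `C` with respect to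
the set of executions `𝒜`. -/
def VUnivalentIn (A : Algorithm n) (input : Fin n → Bool) (C : Config A)
    (𝒜 : Set (List (Event n))) (P : Set (Fin n)) (α : List (Event n)) (v : Bool) : Prop :=
  α ∈ 𝒜 ∧ ∀ β : List (Event n), (∀ e ∈ β, eventBy P e) → (α ++ β) ∈ 𝒜 →
    ∀ (i : Fin n) (w : Bool), HasDecided A input C (α ++ β) i w → w = v

/-- The set of processes `P` is bivalent in the execution `α` from `C` with respect to `𝒜`. -/
def BivalentIn (A : Algorithm n) (input : Fin n → Bool) (C : Config A)
    (𝒜 : Set (List (Event n))) (P : Set (Fin n)) (α : List (Event n)) : Prop :=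
  ∀ v : Bool, ∃ β : List (Event n), (∀ e ∈ β, eventBy P e) ∧ (α ++ β) ∈ 𝒜 ∧
    ∃ i : Fin n, HasDecided A input C (α ++ β) i v

/-- `P` is univalent in `α` with respect to `𝒜`: `v`-univalent for some `v`. -/
def UnivalentIn (A : Algorithm n) (input : Fin n → Bool) (C : Config A)
    (𝒜 : Set (List (Event n))) (P : Set (Fin n)) (α : List (Event n)) : Prop :=
  ∃ v : Bool, VUnivalentIn A input C 𝒜 P α v

/-- `α ∈ 𝒜` is critical with respect to `𝒜`: `α` is bivalent with respect to `𝒜` and every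
nonempty extension of `α` inside `𝒜` is univalent with respect to `𝒜`. -/
def Critical (A : Algorithm n) (input : Fin n → Bool) (C : Config A)
    (𝒜 : Set (List (Event n))) (α : List (Event n)) : Prop :=
  α ∈ 𝒜 ∧ BivalentIn A input C 𝒜 Set.univ α ∧
  ∀ β : List (Event n), β ≠ [] → (α ++ β) ∈ 𝒜 → UnivalentIn A input C 𝒜 Set.univ (α ++ β)

/-- Process `i` is on team `v` in `Cα` (with respect to `𝒜`): `α p_i` is `v`-univalent. -/
def OnTeam (A : Algorithm n) (input : Fin n → Bool) (C : Config A)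
    (𝒜 : Set (List (Event n))) (α : List (Event n)) (i : Fin n) (v : Bool) : Prop :=
  VUnivalentIn A input C 𝒜 Set.univ (α ++ [Event.step i]) v

/-- Process `i` is poised to apply an operation to object `O` in configuration `C`. -/
def PoisedAt (A : Algorithm n) (C : Config A) (i : Fin n) (O : A.ObjIdx) : Prop :=
  ∃ op, A.pending i (C.pstate i) = some ⟨O, op⟩

/-- `σ ∈ 𝒮(P)`: a crash-free schedule in which each process of `P` takes at most one step
and no other process takes a step. -/
def IsSched (P : Set (Fin n)) (σ : List (Event n)) : Prop :=
  ∃ l : List (Fin n), l.Nodup ∧ (∀ j ∈ l, j ∈ P) ∧ σ = l.map Event.step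

/-- The schedule `λ_k = c_k c_{k+1} ⋯ c_{n-1}`. -/
def lambdaSched (n k : ℕ) : List (Event n) :=
  ((List.finRange n).filter fun j => decide (k ≤ j.val)).map Event.crash

/-- `U_v`: the set of values of object `O` reachable from `Dα` by a schedule in `𝒮(𝒫)`
whose first process is on team `v`. -/
def USetCfg (A : Algorithm n) (input : Fin n → Bool) (D : Config A)
    (𝒜 : Set (List (Event n))) (α : List (Event n)) (O : A.ObjIdx) (v : Bool) :
    Set (A.objType O).Value :=
  { w | ∃ (j : Fin n) (σ : List (Event n)), OnTeam A input D 𝒜 α j v ∧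
        IsSched {k : Fin n | k ≠ j} σ ∧
        w = (run A input D (α ++ Event.step j :: σ)).oval O }

/-- The configuration `Dα` is `v`-hiding. -/
def VHiding (A : Algorithm n) (input : Fin n → Bool) (D : Config A)
    (𝒜 : Set (List (Event n))) (α : List (Event n)) (O : A.ObjIdx) (v : Bool) : Prop :=
  USetCfg A input D 𝒜 α O false ∩ USetCfg A input D 𝒜 α O true = ∅ ∧
  (run A input D α).oval O ∈ USetCfg A input D 𝒜 α O v

/-- The configuration `Dα` is `n`-recording. -/
def NRecordingCfg (A : Algorithm n) (input : Fin n → Bool) (D : Config A)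
    (𝒜 : Set (List (Event n))) (α : List (Event n)) (O : A.ObjIdx) : Prop :=
  USetCfg A input D 𝒜 α O false ∩ USetCfg A input D 𝒜 α O true = ∅ ∧
  ∀ v : Bool, (run A input D α).oval O ∈ USetCfg A input D 𝒜 α O v →
    ∃! j : Fin n, OnTeam A input D 𝒜 α j (!v)

/-- Apply the operations `o i` of the processes listed in `σ`, in order, to an object of type
`T`, starting from the value `u`. -/
def applyOps (T : DetType) (o : Fin n → T.Op) : T.Value → List (Fin n) → T.Value
  | u, [] => u
  | u, i :: σ => applyOps T o (T.δ u (o i)).2 σ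

/-- `U_x`: the set of values obtainable by applying the operations of the processes of a
duplicate-free schedule whose first process is on team `x` to an object with initial value
`u`. -/
def UVals (T : DetType) (o : Fin n → T.Op) (u : T.Value) (team : Fin n → Bool) (x : Bool) :
    Set T.Value :=
  { v | ∃ (i : Fin n) (σ : List (Fin n)), team i = x ∧ (i :: σ).Nodup ∧
        v = applyOps T o u (i :: σ) }

/-- A deterministic type `T` is `n`-recording. -/
def NRecording (n : ℕ) (T : DetType) : Prop :=
  ∃ (u : T.Value) (team : Fin n → Bool) (o : Fin n → T.Op),
    (∀ x : Bool, ∃ i, team i = x) ∧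
    (UVals T o u team false ∩ UVals T o u team true = ∅) ∧
    (∀ x : Bool, u ∈ UVals T o u team x → ∃! i, team i = !x)

end RecoverableConsensus

namespace RecoverableConsensus

/-- The type `T` has recoverable consensus number at least `n`: there is a recoverable
wait-free binary consensus algorithm for `n` processes using objects of type `T` together
with registers. -/
def RecConsensusNumberGe (n : ℕ) (T : DetType) : Prop :=
  ∃ A : Algorithm n,
    (∀ o : A.ObjIdx, A.objType o = T ∨ IsRegister (A.objType o)) ∧ SolvesRecConsensus A

end RecoverableConsensus

namespace RecoverableConsensus

section Schedules

variable {n : ℕ}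

/-! ### Crash budgets -/

/-- The process that takes part in an event. -/
def Event.proc : Event n → Fin n
  | .step i => i
  | .crash i => i

/-- The number of crashes of `i` in `σ`. -/
abbrev cr (i : Fin n) (σ : List (Event n)) : ℕ := σ.count (Event.crash i)

/-- The number of steps in `σ` of processes with index smaller than `i`. -/
abbrev sb (i : Fin n) (σ : List (Event n)) : ℕ := σ.countP (isStepBelow i)

/-- `Bud s β`: in each prefix of `β`, each process `i` crashes at most twice per step of a process
with smaller index, with `s i` further crashes tolerated. -/
def Bud (s : Fin n → ℕ) (β : List (Event n)) : Prop :=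
  ∀ τ, τ <+: β → ∀ i, cr i τ ≤ 2 * sb i τ + s i

/-- The allowance of `c` further crashes for each of the processes `k, k + 1, …, n - 1`. -/
def slack (k c : ℕ) : Fin n → ℕ := fun i => if k ≤ i.val then c else 0

lemma Bud.self {s : Fin n → ℕ} {β : List (Event n)} (h : Bud s β) (i : Fin n) :
    cr i β ≤ 2 * sb i β + s i := h β List.prefix_rfl i

lemma Bud.mono {s s' : Fin n → ℕ} {β : List (Event n)} (h : Bud s β) (hs : ∀ i, s i ≤ s' i) :
    Bud s' β := fun τ hτ i => (h τ hτ i).trans (by have := hs i; omega)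

lemma Bud.append {s s' : Fin n → ℕ} {α β : List (Event n)} (hα : Bud s α) (hβ : Bud s' β)
    (h : ∀ i, s' i + cr i α ≤ 2 * sb i α + s i) : Bud s (α ++ β) := by
  intro τ hτ i
  rcases le_total τ.length α.length with hl | hl
  · exact hα τ (List.prefix_of_prefix_length_le hτ (List.prefix_append α β) hl) i
  · obtain ⟨ρ, rfl⟩ := List.prefix_of_prefix_length_le (List.prefix_append α β) hτ hl
    have hρ := hβ ρ ((List.prefix_append_right_inj α).1 hτ) i
    have := h i
    simp only [cr, sb, List.count_append, List.countP_append] at *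
    omega

lemma Bud.of_append {s : Fin n → ℕ} {α β : List (Event n)} (h : Bud s (α ++ β)) : Bud s α :=
  fun τ hτ => h τ (hτ.trans (List.prefix_append α β))

lemma Bud.append_same {s : Fin n → ℕ} {α β : List (Event n)} (hα : Bud s α) (hβ : Bud 0 β) :
    Bud s (α ++ β) := by
  intro τ hτ i
  rcases le_total τ.length α.length with hl | hl
  · exact hα τ (List.prefix_of_prefix_length_le hτ (List.prefix_append α β) hl) i
  · obtain ⟨ρ, rfl⟩ := List.prefix_of_prefix_length_le (List.prefix_append α β) hτ hl
    have hρ := hβ ρ ((List.prefix_append_right_inj α).1 hτ) i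
    have := hα.self i
    simp only [cr, sb, List.count_append, List.countP_append, Pi.zero_apply] at *
    omega

lemma cr_steps (l : List (Fin n)) (i : Fin n) : cr i (l.map Event.step) = 0 := by
  simp [cr, List.count_eq_zero]

lemma Bud.steps (s : Fin n → ℕ) (l : List (Fin n)) : Bud s (l.map Event.step) := by
  intro τ hτ i
  have h1 := hτ.count_le (Event.crash i)
  have h2 := cr_steps l i
  simp only [cr] at *
  omega

lemma Bud.nil (s : Fin n → ℕ) : Bud s ([] : List (Event n)) := Bud.steps s []

lemma Bud.rep (s : Fin n → ℕ) (m : ℕ) (i : Fin n) : Bud s (List.replicate m (Event.step i)) := by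
  have := Bud.steps s (List.replicate m i)
  simpa using this

lemma Bud.single (s : Fin n → ℕ) (i : Fin n) : Bud s [Event.step i] := Bud.rep s 1 i

lemma cr_lambda_le (k : ℕ) (i : Fin n) : cr i (lambdaSched n k) ≤ slack k 1 i := by
  unfold slack
  split_ifs with h
  · refine List.nodup_iff_count_le_one.1 ?_ _
    refine List.Nodup.map (fun a b h => by injection h) ?_
    exact (List.nodup_finRange n).filter _
  · simp only [cr, lambdaSched, Nat.le_zero, List.count_eq_zero]
    simp
    omega

lemma Bud.lambda (k : ℕ) : Bud (slack k 1) (lambdaSched n k) := by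
  intro τ hτ i
  have h1 := hτ.count_le (Event.crash i)
  have h2 := cr_lambda_le k i
  simp only [cr] at *
  omega

lemma sb_pos {k : ℕ} {l : List (Fin n)} {j : Fin n} (hj : j ∈ l) (hjk : j.val < k) {i : Fin n}
    (hi : k ≤ i.val) : 1 ≤ sb i (l.map Event.step) := by
  refine List.countP_pos_iff.2 ⟨Event.step j, List.mem_map_of_mem hj, ?_⟩
  simp only [isStepBelow, decide_eq_true_eq]
  exact Fin.lt_def.2 (by omega)

/-- A step of a process below `k` pays for a crash of all processes from `k` on, and for one more
crash of each of them later. -/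
lemma Bud.pay {k : ℕ} {l : List (Fin n)} {j : Fin n} (hj : j ∈ l) (hjk : j.val < k)
    {α β : List (Event n)} (hα : Bud 0 α) (hβ : Bud (slack k 1) β) :
    Bud 0 (α ++ (l.map Event.step ++ (lambdaSched n k ++ β))) := by
  refine hα.append_same ?_
  refine (Bud.steps 0 l).append (s' := slack k 2) ?_ ?_
  · refine ((Bud.lambda k).mono ?_).append hβ ?_
    · intro i; unfold slack; split_ifs <;> omega
    · intro i
      have := cr_lambda_le k i
      unfold slack at *
      split_ifs at * <;> omega
  · intro i
    rw [cr_steps]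
    unfold slack
    split_ifs with h
    · have := sb_pos hj hjk h
      simp only [Pi.zero_apply]
      omega
    · simp

/-! ### Runs and indistinguishability -/

variable (A : Algorithm n) (input : Fin n → Bool)

lemma run_append (C : Config A) (σ τ : List (Event n)) :
    run A input C (σ ++ τ) = run A input (run A input C σ) τ := by
  induction σ generalizing C with
  | nil => rfl
  | cons e σ ih => exact ih _

/-- `C` and `C'` have the same object values and the processes of `P` cannot tell them apart. -/
def Agree (P : Set (Fin n)) (C C' : Config A) : Prop :=
  C.oval = C'.oval ∧ ∀ j ∈ P, C.pstate j = C'.pstate j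

variable {A}

lemma Agree.symm {P : Set (Fin n)} {C C' : Config A} (h : Agree A P C C') : Agree A P C' C :=
  ⟨h.1.symm, fun j hj => (h.2 j hj).symm⟩

lemma applyEvent_none {C : Config A} {i : Fin n} (h : A.pending i (C.pstate i) = none) :
    applyEvent A input C (Event.step i) = C := by
  simp [applyEvent, h]

open scoped Classical in
lemma applyEvent_some {C : Config A} {i : Fin n} {o : A.ObjIdx} {op : (A.objType o).Op}
    (h : A.pending i (C.pstate i) = some ⟨o, op⟩) :
    applyEvent A input C (Event.step i) =
      { pstate := Function.update C.pstate i
          (A.next i (C.pstate i) o ((A.objType o).δ (C.oval o) op).1),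
        oval := Function.update C.oval o ((A.objType o).δ (C.oval o) op).2 } := by
  simp only [applyEvent, h]

lemma applyEvent_pstate_ne {C : Config A} {e : Event n} {j : Fin n} (h : e.proc ≠ j) :
    (applyEvent A input C e).pstate j = C.pstate j := by
  cases e with
  | crash i => simp only [applyEvent]; exact Function.update_of_ne (Ne.symm h) _ _
  | step i =>
    cases hp : A.pending i (C.pstate i) with
    | none => rw [applyEvent_none input hp]
    | some x =>
      obtain ⟨o, op⟩ := x
      rw [applyEvent_some input hp]
      exact Function.update_of_ne (Ne.symm h) _ _

lemma Agree.applyEvent {P : Set (Fin n)} {C C' : Config A} (h : Agree A P C C') {e : Event n}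
    (he : e.proc ∈ P) : Agree A P (applyEvent A input C e) (applyEvent A input C' e) := by
  obtain ⟨ps, ov⟩ := C
  obtain ⟨ps', ov'⟩ := C'
  obtain ⟨h1, h2⟩ := h
  dsimp only at h1 h2
  subst h1
  have hst := h2 _ he
  cases e with
  | crash i =>
    refine ⟨rfl, fun j hj => ?_⟩
    by_cases hji : j = i
    · subst hji; simp [RecoverableConsensus.applyEvent]
    · rw [applyEvent_pstate_ne input (Ne.symm hji), applyEvent_pstate_ne input (Ne.symm hji)]
      exact h2 j hj
  | step i =>
    simp only [Event.proc] at hst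
    cases hp : A.pending i (ps i) with
    | none =>
      rw [applyEvent_none input (C := ⟨ps, ov⟩) hp,
        applyEvent_none input (C := ⟨ps', ov⟩) (by simpa only [← hst] using hp)]
      exact ⟨rfl, h2⟩
    | some x =>
      obtain ⟨o, op⟩ := x
      rw [applyEvent_some input (C := ⟨ps, ov⟩) hp,
        applyEvent_some input (C := ⟨ps', ov⟩) (by simpa only [← hst] using hp)]
      refine ⟨rfl, fun j hj => ?_⟩
      by_cases hji : j = i
      · subst hji; simp [hst]
      · simp only [Function.update_of_ne hji]; exact h2 j hj

lemma Agree.run {P : Set (Fin n)} {C C' : Config A} (h : Agree A P C C') {β : List (Event n)}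
    (hβ : ∀ e ∈ β, e.proc ∈ P) : Agree A P (run A input C β) (run A input C' β) := by
  induction β generalizing C C' with
  | nil => exact h
  | cons e β ih =>
    exact ih (h.applyEvent input (hβ e (by simp))) (fun e' he' => hβ e' (by simp [he']))

lemma run_crashes (C : Config A) (l : List (Fin n)) :
    (run A input C (l.map Event.crash)).oval = C.oval ∧
    (∀ j ∈ l, (run A input C (l.map Event.crash)).pstate j = A.init j (input j)) ∧
    (∀ j, j ∉ l → (run A input C (l.map Event.crash)).pstate j = C.pstate j) := by
  induction l generalizing C with
  | nil => simp [run]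
  | cons i l ih =>
    obtain ⟨h1, h2, h3⟩ := ih (applyEvent A input C (Event.crash i))
    refine ⟨h1, fun j hj => ?_, fun j hj => ?_⟩
    · by_cases hjl : j ∈ l
      · exact h2 j hjl
      · have hji : j = i := by simpa [hjl] using hj
        subst hji
        refine (h3 j hjl).trans ?_
        simp [applyEvent]
    · simp only [List.mem_cons, not_or] at hj
      exact (h3 j hj.2).trans (applyEvent_pstate_ne input (Ne.symm hj.1))

lemma run_lambda (C : Config A) (k : ℕ) :
    (run A input C (lambdaSched n k)).oval = C.oval ∧
    (∀ j : Fin n, k ≤ j.val → (run A input C (lambdaSched n k)).pstate j = A.init j (input j)) ∧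
    (∀ j : Fin n, j.val < k → (run A input C (lambdaSched n k)).pstate j = C.pstate j) := by
  obtain ⟨h1, h2, h3⟩ :=
    run_crashes input C ((List.finRange n).filter fun j => decide (k ≤ j.val))
  exact ⟨h1, fun j hj => h2 j (by simpa using hj), fun j hj => h3 j (by simpa using hj)⟩

/-- The crashes `λ_k` make configurations with equal object values indistinguishable to the
processes from `k` on. -/
lemma agree_lambda {C C' : Config A} (h : C.oval = C'.oval) (k : ℕ) :
    Agree A {j | k ≤ j.val} (run A input C (lambdaSched n k))
      (run A input C' (lambdaSched n k)) := by
  obtain ⟨h1, h2, -⟩ := run_lambda input C k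
  obtain ⟨h1', h2', -⟩ := run_lambda input C' k
  exact ⟨by rw [h1, h1', h], fun j hj => by rw [h2 j hj, h2' j hj]⟩

/-- If all processes are poised at `O`, a schedule in which each process steps at most once acts
on `O` alone, through the pending operations. -/
lemma run_steps {O : A.ObjIdx} {op : Fin n → (A.objType O).Op} (l : List (Fin n)) (C : Config A)
    (hl : l.Nodup) (hp : ∀ i ∈ l, A.pending i (C.pstate i) = some ⟨O, op i⟩) :
    (run A input C (l.map Event.step)).oval O = applyOps (A.objType O) op (C.oval O) l ∧
    (∀ o, o ≠ O → (run A input C (l.map Event.step)).oval o = C.oval o) ∧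
    (∀ j, j ∉ l → (run A input C (l.map Event.step)).pstate j = C.pstate j) := by
  classical
  induction l generalizing C with
  | nil => simp [run, applyOps]
  | cons i l ih =>
    have hi := hp i (by simp)
    have hil : i ∉ l := (List.nodup_cons.1 hl).1
    obtain ⟨h1, h2, h3⟩ := ih (applyEvent A input C (Event.step i)) (List.nodup_cons.1 hl).2
      (fun j hj => by
        have hne : i ≠ j := fun h => hil (h ▸ hj)
        rw [applyEvent_pstate_ne input (e := Event.step i) hne]
        exact hp j (by simp [hj]))
    have hov : (applyEvent A input C (Event.step i)).oval O
        = ((A.objType O).δ (C.oval O) (op i)).2 := by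
      rw [applyEvent_some input hi]; simp
    refine ⟨?_, fun o ho => ?_, fun j hj => ?_⟩
    · rw [hov] at h1; exact h1
    · refine (h2 o ho).trans ?_
      rw [applyEvent_some input hi]
      exact Function.update_of_ne ho _ _
    · simp only [List.mem_cons, not_or] at hj
      exact (h3 j hj.2).trans (applyEvent_pstate_ne input (Ne.symm hj.1))

/-! ### Decisions -/

variable (A)

/-- Some process decides `v` in the execution `σ` from the initial configuration. -/
def Dec (σ : List (Event n)) (v : Bool) : Prop :=
  ∃ i, HasDecided A input (initConfig A input) σ i v

variable {A input}

lemma Dec.mono {σ τ : List (Event n)} {v : Bool} (h : Dec A input σ v) (hστ : σ <+: τ) :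
    Dec A input τ v := by
  obtain ⟨i, ρ, hρ, ho⟩ := h
  exact ⟨i, ρ, hρ.trans hστ, ho⟩

lemma Dec.agree (hA : Agreement A) {σ : List (Event n)} {v w : Bool} (hv : Dec A input σ v)
    (hw : Dec A input σ w) : v = w := by
  obtain ⟨i, hi⟩ := hv
  obtain ⟨j, hj⟩ := hw
  exact hA input σ i j v w hi hj

lemma output_stable {C : Config A} {i : Fin n} {v : Bool} {σ : List (Event n)}
    (h : A.output i (C.pstate i) = some v) (hσ : Event.crash i ∉ σ) :
    A.output i ((run A input C σ).pstate i) = some v := by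
  induction σ generalizing C with
  | nil => exact h
  | cons e σ ih =>
    simp only [List.mem_cons, not_or] at hσ
    refine ih ?_ hσ.2
    by_cases he : e.proc = i
    · cases e with
      | crash j => simp only [Event.proc] at he; subst he; exact absurd rfl hσ.1
      | step j =>
        simp only [Event.proc] at he
        subst he
        rw [applyEvent_none input (A.output_noop _ _ (by simp [h]))]
        exact h
    · rw [applyEvent_pstate_ne input he]; exact h

/-- Every execution splits at the last reset of `i`. -/
lemma exists_last_reset (i : Fin n) (σ : List (Event n)) :
    ∃ σ₁ σ₂, σ = σ₁ ++ σ₂ ∧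
      (run A input (initConfig A input) σ₁).pstate i = A.init i (input i) ∧
      Event.crash i ∉ σ₂ := by
  induction σ using List.reverseRecOn with
  | nil => exact ⟨[], [], rfl, rfl, by simp⟩
  | append_singleton σ e ih =>
    by_cases he : e = Event.crash i
    · refine ⟨σ ++ [e], [], by simp, ?_, by simp⟩
      subst he
      simp [run_append, run, applyEvent]
    · obtain ⟨σ₁, σ₂, h1, h2, h3⟩ := ih
      refine ⟨σ₁, σ₂ ++ [e], by simp [h1], h2, ?_⟩
      simp only [List.mem_append, List.mem_singleton, not_or]
      exact ⟨h3, Ne.symm he⟩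

lemma initSeg_prefix (e : ℕ → Event n) {k m : ℕ} (h : k ≤ m) :
    initSeg e k <+: initSeg e m := by
  obtain ⟨d, rfl⟩ := Nat.exists_eq_add_of_le h
  simp only [initSeg, List.range_add, List.map_append]
  exact List.prefix_append _ _

/-- Running alone, a process reaches an output state. -/
lemma solo (hW : RecWaitFree A) (σ : List (Event n)) (i : Fin n) :
    ∃ m v, A.output i ((run A input (initConfig A input)
      (σ ++ List.replicate m (Event.step i))).pstate i) = some v := by
  obtain ⟨σ₁, σ₂, rfl, hinit, hcr⟩ := exists_last_reset (A := A) (input := input) i σ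
  let e : ℕ → Event n := fun k => if h : k < σ₂.length then σ₂[k] else Event.step i
  have hseg : ∀ m, initSeg e (σ₂.length + m) = σ₂ ++ List.replicate m (Event.step i) := by
    intro m
    apply List.ext_getElem
    · simp [initSeg]
    · intro k h1 h2
      simp only [initSeg, List.getElem_map, List.getElem_range, e]
      split_ifs with hk
      · rw [List.getElem_append_left hk]
      · rw [List.getElem_append_right (by omega)]; simp
  obtain ⟨k, v, hk⟩ := hW input (run A input (initConfig A input) σ₁) e i (Or.inl hinit)
    (fun m => ⟨max m σ₂.length, le_max_left _ _, by simp [e]⟩)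
    ⟨σ₂.length, fun k hk => by simp [e, Nat.not_lt.2 hk]⟩
  refine ⟨k, v, ?_⟩
  obtain ⟨ρ, hρ⟩ := initSeg_prefix e (Nat.le_add_left k σ₂.length)
  rw [hseg] at hρ
  rw [List.append_assoc, run_append, ← hρ, run_append]
  refine output_stable hk ?_
  intro hmem
  have : Event.crash i ∈ σ₂ ++ List.replicate k (Event.step i) := by
    rw [← hρ]; exact List.mem_append_right _ hmem
  rcases List.mem_append.1 this with h | h
  · exact hcr h
  · exact absurd (List.eq_of_mem_replicate h) (by simp)

/-- If the processes of `P` cannot distinguish `σ` from `σ'`, then after any events of `P` some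
solo run of a given process of `P` leads to the same decision in both executions. -/
lemma transfer (hW : RecWaitFree A) {P : Set (Fin n)} {σ σ' : List (Event n)}
    (h : Agree A P (run A input (initConfig A input) σ) (run A input (initConfig A input) σ'))
    {β : List (Event n)} (hβ : ∀ e ∈ β, e.proc ∈ P) {i : Fin n} (hi : i ∈ P) :
    ∃ m v, Dec A input (σ ++ (β ++ List.replicate m (Event.step i))) v ∧
      Dec A input (σ' ++ (β ++ List.replicate m (Event.step i))) v := by
  obtain ⟨m, v, hm⟩ := solo (input := input) hW (σ ++ β) i
  rw [List.append_assoc] at hm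
  refine ⟨m, v, ⟨i, _, List.prefix_rfl, hm⟩, ⟨i, _, List.prefix_rfl, ?_⟩⟩
  have := h.run input (β := β ++ List.replicate m (Event.step i)) (by
    intro e he
    rcases List.mem_append.1 he with h | h
    · exact hβ e h
    · rw [List.eq_of_mem_replicate h]; exact hi)
  rw [run_append] at hm ⊢
  rw [← this.2 i hi]
  exact hm

/-- Along an infinite execution without decisions, given by its growing finite prefixes `L t`, a
process that takes infinitely many steps crashes infinitely often. -/
lemma limit (hW : RecWaitFree A) (L : ℕ → List (Event n)) (hL : ∀ t, L t <+: L (t + 1))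
    (hund : ∀ t v, ¬ Dec A input (L t) v) (i : Fin n)
    (hst : ∀ M, ∃ t, M ≤ (L t).count (Event.step i))
    (hcr : ∃ M, ∀ t, cr i (L t) ≤ M) : False := by
  have hmono : ∀ s t, s ≤ t → L s <+: L t := by
    intro s t hst
    induction t, hst using Nat.le_induction with
    | base => exact List.prefix_rfl
    | succ t _ ih => exact ih.trans (hL t)
  have hlen : ∀ k, ∃ t, k < (L t).length := by
    intro k
    obtain ⟨t, ht⟩ := hst (k + 1)
    exact ⟨t, lt_of_lt_of_le ht List.count_le_length⟩
  choose T hT using hlen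
  let e : ℕ → Event n := fun k => (L (T k))[k]'(hT k)
  have he : ∀ k t (h : k < (L t).length), e k = (L t)[k] := by
    intro k t h
    rcases le_total t (T k) with h' | h'
    · exact ((hmono _ _ h').getElem h).symm
    · exact (hmono _ _ h').getElem (hT k)
  have hseg : ∀ k t, k ≤ (L t).length → initSeg e k = (L t).take k := by
    intro k t h
    apply List.ext_getElem
    · simp [initSeg, h]
    · intro q h1 h2
      simp only [initSeg, List.getElem_map, List.getElem_range, List.getElem_take]
      apply he
  obtain ⟨M, hM⟩ := hcr
  have hmax : ∃ t₀, ∀ t, cr i (L t) ≤ cr i (L t₀) := by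
    have hfin : (Set.range fun t => cr i (L t)).Finite :=
      (Set.finite_Iic M).subset (by rintro _ ⟨t, rfl⟩; exact hM t)
    obtain ⟨_, ⟨t₀, rfl⟩, h⟩ := hfin.exists_maximal (Set.range_nonempty _)
    exact ⟨t₀, fun t => by
      rcases le_total (cr i (L t)) (cr i (L t₀)) with h' | h'
      · exact h'
      · exact h ⟨t, rfl⟩ h'⟩
  obtain ⟨t₀, ht₀⟩ := hmax
  have hinf : ∀ m, ∃ k, m ≤ k ∧ e k = Event.step i := by
    intro m
    obtain ⟨t, ht⟩ := hst (m + 1)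
    have hsplit : ((L t).take m).count (Event.step i) + ((L t).drop m).count (Event.step i)
        = (L t).count (Event.step i) := by
      rw [← List.count_append, List.take_append_drop]
    have hle : ((L t).take m).count (Event.step i) ≤ m :=
      List.count_le_length.trans (List.length_take_le _ _)
    have hpos : 0 < ((L t).drop m).count (Event.step i) := by omega
    obtain ⟨q, hq, hqe⟩ := List.getElem_of_mem (List.count_pos_iff.1 hpos)
    rw [List.getElem_drop] at hqe
    refine ⟨m + q, Nat.le_add_right _ _, ?_⟩
    rw [he (m + q) t (by simp at hq; omega)]
    exact hqe
  have hfin : ∃ m, ∀ k, m ≤ k → e k ≠ Event.crash i := by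
    refine ⟨(L t₀).length, fun k hk hek => ?_⟩
    have hkT := hT k
    have hlt : t₀ ≤ T k := by
      by_contra hcon
      have := (hmono (T k) t₀ (by omega)).length_le
      omega
    obtain ⟨ρ, hρ⟩ := hmono _ _ hlt
    have hmem : Event.crash i ∈ ρ := by
      have hek' : (L (T k))[k]'hkT = Event.crash i := hek
      simp only [← hρ] at hek'
      rw [List.getElem_append_right hk] at hek'
      exact hek' ▸ List.getElem_mem _
    have h1 := ht₀ (T k)
    have h2 : 0 < ρ.count (Event.crash i) := List.count_pos_iff.2 hmem
    rw [← hρ] at h1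
    simp only [cr, List.count_append] at h1
    omega
  obtain ⟨k, v, hk⟩ := hW input (initConfig A input) e i (Or.inl rfl) hinf hfin
  refine hund (T k) v ⟨i, initSeg e k, ?_, hk⟩
  rw [hseg k (T k) (hT k).le]
  exact List.take_prefix _ _

end Schedules

end RecoverableConsensus

namespace RecoverableConsensus

section Valency

variable {n : ℕ} (A : Algorithm n) (input : Fin n → Bool)

/-! ### Valency and critical executions -/

/-- After the execution `σ`, the processes from `K` on, running without the others, can only
decide `v`, even with one crash each beyond the budget. -/
def Uni (K : ℕ) (σ : List (Event n)) (v : Bool) : Prop :=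
  ∀ β : List (Event n), (∀ e ∈ β, K ≤ e.proc.val) → Bud (slack K 1) β →
    ∀ w, Dec A input (σ ++ β) w → w = v

/-- All extensions of `δ ++ α` decide only `v`. The crash budget is counted from the end of `δ`
on. -/
def Val (δ α : List (Event n)) (v : Bool) : Prop :=
  ∀ β, Bud 0 (α ++ β) → ∀ w, Dec A input (δ ++ (α ++ β)) w → w = v

/-- Both values can still be decided after `δ ++ α`, with the crash budget counted from the end of
`δ` on. -/
def Biv (δ α : List (Event n)) : Prop :=
  Bud 0 α ∧ ∀ v, ∃ β, Bud 0 (α ++ β) ∧ Dec A input (δ ++ (α ++ β)) v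

/-- `α` is bivalent and none of its proper extensions is. -/
def Crit (δ α : List (Event n)) : Prop :=
  Biv A input δ α ∧ ∀ β, β ≠ [] → Bud 0 (α ++ β) → ¬ Biv A input δ (α ++ β)

variable {A input}

lemma Biv.undecided (hA : Agreement A) {δ α : List (Event n)} (h : Biv A input δ α) (v : Bool) :
    ¬ Dec A input (δ ++ α) v := by
  intro hv
  obtain ⟨β, -, hβ⟩ := h.2 (!v)
  have := (hv.mono (τ := δ ++ (α ++ β)) (by simp [← List.append_assoc])).agree hA hβ
  cases v <;> simp at this

lemma Uni.exists_dec (hW : RecWaitFree A) {K : ℕ} {σ : List (Event n)} {v : Bool}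
    (h : Uni A input K σ v) {i : Fin n} (hi : K ≤ i.val) :
    ∃ m, Dec A input (σ ++ List.replicate m (Event.step i)) v := by
  obtain ⟨m, w, hm⟩ := solo (input := input) hW σ i
  have hd : Dec A input (σ ++ List.replicate m (Event.step i)) w := ⟨i, _, List.prefix_rfl, hm⟩
  have := h _ (fun e he => by rw [List.eq_of_mem_replicate he]; exact hi) (Bud.rep _ _ _) w hd
  exact ⟨m, this ▸ hd⟩

lemma Uni.unique (hW : RecWaitFree A) {K : ℕ} (hK : K < n) {σ : List (Event n)} {v w : Bool}
    (h : Uni A input K σ v) (h' : Uni A input K σ w) : v = w := by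
  obtain ⟨m, hm⟩ := h.exists_dec hW (i := ⟨K, hK⟩) le_rfl
  exact h' _ (fun e he => by rw [List.eq_of_mem_replicate he]; exact le_rfl) (Bud.rep _ _ _) v hm

lemma sb_eq_sum (i : Fin n) (σ : List (Event n)) :
    sb i σ = ∑ j ∈ Finset.univ.filter (· < i), σ.count (Event.step j) := by
  induction σ with
  | nil => simp
  | cons e σ ih =>
    simp only [sb, List.countP_cons, List.count_cons, Finset.sum_add_distrib] at *
    rw [ih]
    congr 1
    cases e with
    | crash k => simp [isStepBelow]
    | step k => simp [isStepBelow]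

lemma length_le_sum (σ : List (Event n)) :
    σ.length ≤ ∑ i, (σ.count (Event.step i) + cr i σ) := by
  induction σ with
  | nil => simp
  | cons e σ ih =>
    simp only [cr, List.length_cons, List.count_cons, Finset.sum_add_distrib] at *
    cases e with
    | crash k => simp; omega
    | step k => simp; omega

lemma sb_bounded {L : ℕ → List (Event n)} {i : Fin n}
    (h : ∀ j, j < i → ∃ M, ∀ t, (L t).count (Event.step j) ≤ M) : ∃ M, ∀ t, sb i (L t) ≤ M := by
  have h' : ∀ j, ∃ M, j < i → ∀ t, (L t).count (Event.step j) ≤ M := fun j => by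
    by_cases hj : j < i
    · obtain ⟨M, hM⟩ := h j hj
      exact ⟨M, fun _ => hM⟩
    · exact ⟨0, fun h => absurd h hj⟩
  choose M hM using h'
  refine ⟨∑ j ∈ Finset.univ.filter (· < i), M j, fun t => ?_⟩
  rw [sb_eq_sum]
  exact Finset.sum_le_sum fun j hj => hM j (by simpa using hj) t

/-- Among the processes with unboundedly many steps there is a lowest one; the steps below it are
bounded in number. -/
lemma exists_lowest {L : ℕ → List (Event n)} {i₀ : Fin n}
    (h : ∀ M, ∃ t, M ≤ (L t).count (Event.step i₀)) :
    ∃ i ≤ i₀, (∀ M, ∃ t, M ≤ (L t).count (Event.step i)) ∧ ∃ M, ∀ t, sb i (L t) ≤ M := by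
  induction i₀ using WellFoundedLT.induction with
  | ind i₀ ih =>
    by_cases hlow : ∃ j < i₀, ∀ M, ∃ t, M ≤ (L t).count (Event.step j)
    · obtain ⟨j, hj, hM⟩ := hlow
      obtain ⟨i, hi, h'⟩ := ih j hj hM
      exact ⟨i, hi.trans hj.le, h'⟩
    · push Not at hlow
      refine ⟨i₀, le_rfl, h, sb_bounded fun j hj => ?_⟩
      obtain ⟨M, hM⟩ := hlow j hj
      exact ⟨M, fun t => (hM t).le⟩

/-- An infinite chain of bivalent executions within the budget would let its lowest process with
infinitely many steps crash only finitely often, hence decide. -/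
lemma exists_crit (hA : Agreement A) (hW : RecWaitFree A) {δ : List (Event n)}
    (h : Biv A input δ []) : ∃ α, Crit A input δ α := by
  by_contra hcon
  have hext : ∀ α : {α // Biv A input δ α}, ∃ β, β ≠ [] ∧ Biv A input δ (α.1 ++ β) := by
    intro α
    by_contra h'
    push Not at h'
    exact hcon ⟨α.1, α.2, fun β hβ _ => h' β hβ⟩
  choose g hg0 hg using hext
  let f : ℕ → {α // Biv A input δ α} := fun t =>
    Nat.rec ⟨[], h⟩ (fun _ α => ⟨α.1 ++ g α, hg α⟩) t
  have hf : ∀ t, (f (t + 1)).1 = (f t).1 ++ g (f t) := fun t => rfl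
  have hlen : ∀ t, t ≤ (f t).1.length := by
    intro t
    induction t with
    | zero => simp
    | succ t ih =>
      rw [hf, List.length_append]
      have := List.length_pos_iff.2 (hg0 (f t))
      omega
  have hbud : ∀ t i, cr i (f t).1 ≤ 2 * sb i (f t).1 := fun t i => by
    have := (f t).2.1.self i
    simpa using this
  have hunb : ∃ i, ∀ M, ∃ t, M ≤ ((f t).1).count (Event.step i) := by
    by_contra hb
    push Not at hb
    choose M hM using hb
    have hsb : ∀ i, ∃ N, ∀ t, sb i (f t).1 ≤ N := fun i =>
      sb_bounded (L := fun t => (f t).1) fun j _ => ⟨M j, fun t => (hM j t).le⟩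
    choose N hN using hsb
    have h1 := hlen (∑ i, (M i + 2 * N i) + 1)
    have h2 := length_le_sum (f (∑ i, (M i + 2 * N i) + 1)).1
    have h3 : ∑ i, ((f (∑ i, (M i + 2 * N i) + 1)).1.count (Event.step i)
        + cr i (f (∑ i, (M i + 2 * N i) + 1)).1) ≤ ∑ i, (M i + 2 * N i) := by
      refine Finset.sum_le_sum fun i _ => ?_
      have a := hM i (∑ i, (M i + 2 * N i) + 1)
      have b := hN i (∑ i, (M i + 2 * N i) + 1)
      have c := hbud (∑ i, (M i + 2 * N i) + 1) i
      omega
    omega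
  obtain ⟨i₀, hi₀⟩ := hunb
  obtain ⟨i, -, hi, N, hN⟩ := exists_lowest (L := fun t => (f t).1) hi₀
  refine limit (input := input) hW (fun t => δ ++ (f t).1) ?_ ?_ i ?_ ?_
  · intro t
    simp only [hf]
    rw [← List.append_assoc]
    exact List.prefix_append _ _
  · intro t v
    exact (f t).2.undecided hA v
  · intro M
    obtain ⟨t, ht⟩ := hi M
    exact ⟨t, by simp only [List.count_append]; omega⟩
  · refine ⟨cr i δ + 2 * N, fun t => ?_⟩
    have a := hbud t i
    have b := hN t
    simp only [cr, List.count_append] at *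
    omega

lemma Crit.val_of_append {δ α β : List (Event n)} (hc : Crit A input δ α) (hβ : β ≠ [])
    (hb : Bud 0 (α ++ β)) : ∃ v, Val A input δ (α ++ β) v := by
  have := hc.2 β hβ hb
  simp only [Biv, not_and, not_forall, not_exists] at this
  obtain ⟨v, hv⟩ := this hb
  refine ⟨!v, fun γ hγ w hw => ?_⟩
  by_contra hne
  have hwv : w = v := by revert hne; cases w <;> cases v <;> simp
  subst hwv
  exact hv γ hγ hw

lemma bool_eq_of_ne {x y z : Bool} (h : x ≠ y) (h' : z ≠ y) : x = z := by
  revert h h'; cases x <;> cases y <;> cases z <;> simp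

/-- At a critical execution the first step of each process determines the decision, both decisions
are possible, and all processes are poised at one object. -/
lemma Crit.structure (hn : 1 < n) (hW : RecWaitFree A) {δ α : List (Event n)}
    (hc : Crit A input δ α) :
    ∃ (O : A.ObjIdx) (op : Fin n → (A.objType O).Op) (team : Fin n → Bool),
      (∀ i, A.pending i ((run A input (initConfig A input) (δ ++ α)).pstate i)
        = some ⟨O, op i⟩) ∧
      (∀ i, Val A input δ (α ++ [Event.step i]) (team i)) ∧ ∀ x, ∃ i, team i = x := by
  classical
  have hbα : Bud 0 α := hc.1.1
  have hteam : ∀ i, ∃ v, Val A input δ (α ++ [Event.step i]) v := fun i =>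
    hc.val_of_append (by simp) (hbα.append_same (Bud.single _ _))
  choose team hteam using hteam
  have hsolo : ∀ i m y, Dec A input (δ ++ (α ++ List.replicate m (Event.step i))) y →
      y = team i := by
    intro i m y hy
    refine hteam i (List.replicate m (Event.step i)) ?_ y (hy.mono ?_)
    · exact (hbα.append_same (Bud.single _ _)).append_same (Bud.rep _ _ _)
    · rw [List.append_assoc, List.prefix_append_right_inj, List.prefix_append_right_inj]
      refine ⟨[Event.step i], ?_⟩
      rw [List.singleton_append, ← List.replicate_succ, ← List.replicate_succ']
  have hboth : ∀ x, ∃ i, team i = x := by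
    intro x
    by_contra hx
    push Not at hx
    obtain ⟨β, hb, hd⟩ := hc.1.2 x
    cases β with
    | nil =>
      have := hsolo ⟨0, by omega⟩ 0 x (by simpa using hd)
      exact hx _ this.symm
    | cons e β =>
      cases e with
      | step i =>
        have := hteam i β (by simpa using hb) x (by simpa using hd)
        exact hx _ this.symm
      | crash i =>
        have hb' : Bud 0 (α ++ [Event.crash i]) := by
          refine Bud.of_append (β := β) ?_
          simpa using hb
        obtain ⟨v, hv⟩ := hc.val_of_append (β := [Event.crash i]) (by simp) hb'
        have hxv : x = v := hv β (by simpa using hb) x (by simpa using hd)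
        obtain ⟨j, hj⟩ : ∃ j : Fin n, j ≠ i := by
          by_cases h0 : i.val = 0
          · exact ⟨⟨1, hn⟩, fun h => by rw [← h] at h0; simp at h0⟩
          · exact ⟨⟨0, by omega⟩, fun h => h0 (by rw [← h])⟩
        have hag : Agree A {j} (run A input (initConfig A input) (δ ++ α))
            (run A input (initConfig A input) (δ ++ (α ++ [Event.crash i]))) := by
          rw [← List.append_assoc, run_append _ _ _ (δ ++ α)]
          refine ⟨rfl, fun k hk => ?_⟩
          rw [Set.mem_singleton_iff] at hk
          subst hk
          exact (applyEvent_pstate_ne input (e := Event.crash i) (Ne.symm hj)).symm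
        obtain ⟨m, y, hy1, hy2⟩ := transfer hW hag (β := []) (by simp) (i := j) rfl
        simp only [List.nil_append] at hy1 hy2
        have h1 := hsolo j m y (by rwa [List.append_assoc] at hy1)
        have h2 := hv (List.replicate m (Event.step j)) (hb'.append_same (Bud.rep _ _ _)) y
          (by rwa [List.append_assoc] at hy2)
        exact hx j (by rw [← h1, h2, hxv])
  -- Two schedules that lead to the same configuration and start on different teams are
  -- contradictory.
  have hsame : ∀ i j (l l' : List (Fin n)), team i ≠ team j →
      run A input (initConfig A input) (δ ++ (α ++ (Event.step i :: l.map Event.step)))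
        ≠ run A input (initConfig A input) (δ ++ (α ++ (Event.step j :: l'.map Event.step))) := by
    intro i j l l' hij heq
    have hag : Agree A Set.univ
        (run A input (initConfig A input) (δ ++ (α ++ (Event.step i :: l.map Event.step))))
        (run A input (initConfig A input) (δ ++ (α ++ (Event.step j :: l'.map Event.step)))) := by
      rw [heq]; exact ⟨rfl, fun _ _ => rfl⟩
    obtain ⟨m, y, h1, h2⟩ := transfer hW hag (β := []) (by simp) (i := i) trivial
    have e1 := hteam i (l.map Event.step ++ List.replicate m (Event.step i))
      ((hbα.append_same (Bud.single _ _)).append_same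
        ((Bud.steps _ _).append_same (Bud.rep _ _ _))) y (by simpa using h1)
    have e2 := hteam j (l'.map Event.step ++ List.replicate m (Event.step i))
      ((hbα.append_same (Bud.single _ _)).append_same
        ((Bud.steps _ _).append_same (Bud.rep _ _ _))) y (by simpa using h2)
    exact hij (e1.symm.trans e2)
  set C := run A input (initConfig A input) (δ ++ α) with hC
  have hrun : ∀ l : List (Event n), run A input (initConfig A input) (δ ++ (α ++ l))
      = run A input C l := by
    intro l; rw [← List.append_assoc, run_append]
  have hne : ∀ i, A.pending i (C.pstate i) ≠ none := by
    intro i hi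
    obtain ⟨j, hj⟩ := hboth (!team i)
    refine hsame i j [j] [] (by rw [hj]; simp) ?_
    rw [hrun, hrun]
    simp only [List.map_cons, List.map_nil, run]
    rw [applyEvent_none input hi]
  have hsome : ∀ i, ∃ o, ∃ op : (A.objType o).Op, A.pending i (C.pstate i) = some ⟨o, op⟩ := by
    intro i
    cases hp : A.pending i (C.pstate i) with
    | none => exact absurd hp (hne i)
    | some x => exact ⟨x.1, x.2, rfl⟩
  choose o op hop using hsome
  have hobj : ∀ i j, team i ≠ team j → o i = o j := by
    intro i j hij
    by_contra hoo
    have hine : i ≠ j := fun h => hij (by rw [h])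
    refine hsame i j [j] [i] hij ?_
    rw [hrun, hrun]
    simp only [List.map_cons, List.map_nil, run]
    have hj' : A.pending j ((applyEvent A input C (Event.step i)).pstate j)
        = some ⟨o j, op j⟩ := by
      rw [applyEvent_pstate_ne input (e := Event.step i) hine]; exact hop j
    have hi' : A.pending i ((applyEvent A input C (Event.step j)).pstate i)
        = some ⟨o i, op i⟩ := by
      rw [applyEvent_pstate_ne input (e := Event.step j) (Ne.symm hine)]; exact hop i
    rw [applyEvent_some input hj', applyEvent_some input hi', applyEvent_some input (hop i),
      applyEvent_some input (hop j)]
    have hoo' : o j ≠ o i := Ne.symm hoo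
    simp only [Function.update_of_ne hoo, Function.update_of_ne hoo',
      Function.update_of_ne hine, Function.update_of_ne (Ne.symm hine)]
    rw [Function.update_comm hine, Function.update_comm hoo]
  obtain ⟨i₀, hi₀⟩ := hboth false
  obtain ⟨i₁, hi₁⟩ := hboth true
  have hall : ∀ i, o i = o i₀ := by
    intro i
    by_cases hti : team i = false
    · rw [hobj i i₁ (by rw [hti, hi₁]; simp), hobj i₀ i₁ (by rw [hi₀, hi₁]; simp)]
    · exact hobj i i₀ (by rw [hi₀]; exact hti)
  have hex : ∀ i, ∃ q : (A.objType (o i₀)).Op, A.pending i (C.pstate i) = some ⟨o i₀, q⟩ := by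
    intro i
    rw [← hall i]
    exact ⟨op i, hop i⟩
  choose q hq using hex
  exact ⟨o i₀, q, team, hq, hteam, hboth⟩

end Valency

end RecoverableConsensus

namespace RecoverableConsensus

section Necessity

variable {n : ℕ} {A : Algorithm n} {input : Fin n → Bool}

/-! ### Passing from one critical execution to the next -/

lemma Bud.one {K k : ℕ} (hKk : K ≤ k) {α β : List (Event n)} (hα : Bud 0 α) (hβ : Bud 0 β) :
    Bud (slack K 1) (α ++ (lambdaSched n k ++ β)) := by
  refine (hα.mono (fun i => Nat.zero_le _)).append (s' := slack K 1) ?_ ?_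
  · refine ((Bud.lambda k).mono ?_).append_same hβ
    intro i
    unfold slack
    split_ifs <;> omega
  · intro i
    have := hα.self i
    simp only [Pi.zero_apply] at this
    omega

lemma mem_lambda {k : ℕ} {e : Event n} (he : e ∈ lambdaSched n k) : k ≤ e.proc.val := by
  simp only [lambdaSched, List.mem_map, List.mem_filter, decide_eq_true_eq] at he
  obtain ⟨j, ⟨-, hj⟩, rfl⟩ := he
  exact hj

lemma applyOps_append (T : DetType) (o : Fin n → T.Op) (u : T.Value) (l l' : List (Fin n)) :
    applyOps T o u (l ++ l') = applyOps T o (applyOps T o u l) l' := by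
  induction l generalizing u with
  | nil => rfl
  | cons i l ih => exact ih _

/-- If no object is `n`-recording, a critical execution `α` after `δ` can be prolonged, by steps
and a final crash of all processes from some `K'` on, to an execution that is bivalent again although
the processes from `K'` on are univalent by themselves. Moreover `K'` drops strictly below any `K`
such that the processes from `K` on were univalent after `δ` and `α` involves only them. -/
lemma next_stage (hn : 1 < n) (hA : Agreement A) (hW : RecWaitFree A)
    (hrec : ∀ O, ¬ NRecording n (A.objType O)) {δ α : List (Event n)} (hc : Crit A input δ α) :
    ∃ (l : List (Fin n)) (K' : ℕ), 1 ≤ K' ∧ K' < n ∧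
      Biv A input (δ ++ (α ++ (l.map Event.step ++ lambdaSched n K'))) [] ∧
      (∃ v, Uni A input K' (δ ++ (α ++ (l.map Event.step ++ lambdaSched n K'))) v) ∧
      ∀ K v, K < n → Uni A input K δ v → (∀ e ∈ α, K ≤ e.proc.val) → K' < K := by
  classical
  obtain ⟨O, op, team, hpend, hval, hboth⟩ := hc.structure hn hW
  have hbα : Bud 0 α := hc.1.1
  set C := run A input (initConfig A input) (δ ++ α) with hC
  have hrun : ∀ l : List (Event n), run A input (initConfig A input) (δ ++ (α ++ l))
      = run A input C l := by
    intro l; rw [← List.append_assoc, run_append]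
  set u := C.oval O with hu
  have hsolo : ∀ i m y, Dec A input (δ ++ (α ++ List.replicate m (Event.step i))) y →
      y = team i := by
    intro i m y hy
    refine hval i (List.replicate m (Event.step i)) ?_ y (hy.mono ?_)
    · exact (hbα.append_same (Bud.single _ _)).append_same (Bud.rep _ _ _)
    · rw [List.append_assoc, List.prefix_append_right_inj, List.prefix_append_right_inj]
      refine ⟨[Event.step i], ?_⟩
      rw [List.singleton_append, ← List.replicate_succ, ← List.replicate_succ']
  have hoval : ∀ l l' : List (Fin n), l.Nodup → l'.Nodup →
      applyOps (A.objType O) op u l = applyOps (A.objType O) op u l' →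
      (run A input C (l.map Event.step)).oval = (run A input C (l'.map Event.step)).oval := by
    intro l l' hl hl' heq
    obtain ⟨h1, h2, -⟩ := run_steps input l C hl (fun i _ => hpend i)
    obtain ⟨h1', h2', -⟩ := run_steps input l' C hl' (fun i _ => hpend i)
    funext o
    by_cases ho : o = O
    · subst ho
      rw [h1, h1']
      exact heq
    · rw [h2 o ho, h2' o ho]
  -- After `l'` and the crashes `λ_k`, the processes from `k` on cannot exclude the schedule
  -- `i :: τ`, which contains a step that pays for their crashes.
  have hpay : ∀ (i : Fin n) (τ l' : List (Fin n)) (j : Fin n) (k : ℕ), (i :: τ).Nodup →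
      l'.Nodup → applyOps (A.objType O) op u l' = applyOps (A.objType O) op u (i :: τ) →
      j ∈ i :: τ → j.val < k → k < n →
      Uni A input k (δ ++ (α ++ (l'.map Event.step ++ lambdaSched n k))) (team i) := by
    intro i τ l' j k hnd hnd' heq hj hjk hkn β hβ hbud w hw
    have hag := agree_lambda input (hoval l' (i :: τ) hnd' hnd heq) k
    rw [← run_append A input C, ← run_append A input C, ← hrun, ← hrun] at hag
    obtain ⟨m, y, h1, h2⟩ := transfer hW hag (β := β) hβ (i := ⟨k, hkn⟩) (le_refl k)
    have hy : y = team i := by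
      refine hval i (τ.map Event.step ++ (lambdaSched n k ++
        (β ++ List.replicate m (Event.step ⟨k, hkn⟩)))) ?_ y ?_
      · have := Bud.pay hj hjk hbα (hbud.append_same (Bud.rep 0 m ⟨k, hkn⟩))
        simpa using this
      · simpa using h2
    rw [← hy]
    refine Dec.agree hA (hw.mono ?_) h1
    rw [List.prefix_append_right_inj]
    exact List.prefix_append _ _
  by_cases hdisj : UVals (A.objType O) op u team false ∩ UVals (A.objType O) op u team true = ∅
  · -- Disjoint value sets: the value `u` can be restored, against a team of at least two.
    have hnot : ∃ x, u ∈ UVals (A.objType O) op u team x ∧ ¬ ∃! i, team i = !x := by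
      by_contra hcon
      push Not at hcon
      exact hrec O ⟨u, team, op, hboth, hdisj, fun x hx => hcon x hx⟩
    obtain ⟨x, ⟨i, τ, hti, hnd, huv⟩, huniq⟩ := hnot
    have hdis : ∀ z, z ∈ UVals (A.objType O) op u team x →
        z ∈ UVals (A.objType O) op u team (!x) → False := by
      intro z h1 h2
      have : z ∈ UVals (A.objType O) op u team false ∩ UVals (A.objType O) op u team true := by
        cases x
        · exact ⟨h1, h2⟩
        · exact ⟨h2, h1⟩
      rw [hdisj] at this
      exact this
    -- `k` is the least member of the other team, `k₂` another one
    obtain ⟨k, hk, hkmin⟩ : ∃ k, team k = !x ∧ ∀ j, team j = (!x) → k ≤ j := by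
      have hne : (Finset.univ.filter fun j => team j = !x).Nonempty := by
        obtain ⟨j, hj⟩ := hboth (!x)
        exact ⟨j, by simpa using hj⟩
      refine ⟨(Finset.univ.filter fun j => team j = !x).min' hne, ?_, fun j hj => ?_⟩
      · simpa using Finset.min'_mem _ hne
      · exact Finset.min'_le _ _ (by simpa using hj)
    obtain ⟨k₂, hk₂, hk₂ne⟩ : ∃ k₂, team k₂ = (!x) ∧ k₂ ≠ k := by
      by_contra hcon
      push Not at hcon
      exact huniq ⟨k, hk, fun j hj => hcon j hj⟩
    have hkk₂ : k.val < k₂.val := lt_of_le_of_ne (hkmin k₂ hk₂) (fun h => hk₂ne (Fin.ext h.symm))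
    have hk₂n := k₂.isLt
    have hkmem : k ∈ i :: τ := by
      by_contra hkn
      refine hdis (applyOps (A.objType O) op u [k]) ⟨i, τ ++ [k], hti, ?_, ?_⟩
        ⟨k, [], hk, by simp, rfl⟩
      · rw [← List.cons_append]
        refine List.Nodup.append hnd (by simp) ?_
        intro a ha hb
        simp only [List.mem_singleton] at hb
        exact hkn (hb ▸ ha)
      · rw [← List.cons_append, applyOps_append, ← huv]
    have hU : ∀ K, k.val < K → K < n →
        Uni A input K (δ ++ (α ++ (([] : List (Fin n)).map Event.step ++ lambdaSched n K))) x := by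
      intro K hK hKn
      have := hpay i τ [] k K hnd (by simp) (by rw [← huv]; rfl) hkmem hK hKn
      rwa [hti] at this
    have hk1n : k.val + 1 < n := by omega
    refine ⟨[], k.val + 1, by omega, hk1n, ⟨Bud.nil _, ?_⟩,
      ⟨x, hU _ (by omega) hk1n⟩, ?_⟩
    · intro w
      by_cases hw : w = x
      · subst hw
        obtain ⟨m, hm⟩ := (hU (k.val + 1) (by omega) hk1n).exists_dec hW
          (i := ⟨k.val + 1, hk1n⟩) le_rfl
        exact ⟨List.replicate m (Event.step ⟨k.val + 1, hk1n⟩), by simpa using Bud.rep 0 m _,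
          by simpa using hm⟩
      · have hag : Agree A {k} (run A input (initConfig A input) (δ ++ α))
            (run A input (initConfig A input) (δ ++ (α ++ lambdaSched n (k.val + 1)))) := by
          rw [hrun]
          obtain ⟨h1, -, h3⟩ := run_lambda input C (k.val + 1)
          refine ⟨h1.symm, fun j hj => ?_⟩
          rw [Set.mem_singleton_iff] at hj
          subst hj
          exact (h3 j (by omega)).symm
        obtain ⟨m, y, h1, h2⟩ := transfer hW hag (β := []) (by simp) (i := k) rfl
        have hy : y = team k := hsolo k m y (by simpa using h1)
        have hyw : y = w := by
          rw [hy, hk]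
          revert hw; cases w <;> cases x <;> simp
        subst hyw
        exact ⟨List.replicate m (Event.step k), by simpa using Bud.rep 0 m k, by simpa using h2⟩
    · intro K v hKn hUK hαK
      have hteamK : ∀ j : Fin n, K ≤ j.val → team j = v := by
        intro j hj
        obtain ⟨m, y, hm⟩ := solo (input := input) hW (δ ++ α) j
        have hd : Dec A input (δ ++ (α ++ List.replicate m (Event.step j))) y :=
          ⟨j, _, List.prefix_rfl, by simpa using hm⟩
        rw [← hsolo j m y hd]
        refine hUK _ ?_ ?_ y hd
        · intro e he
          rcases List.mem_append.1 he with h | h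
          · exact hαK e h
          · rw [List.eq_of_mem_replicate h]; exact hj
        · exact (hbα.append_same (Bud.rep _ _ _)).mono (fun _ => Nat.zero_le _)
      have hxv : x = v := by
        by_contra hne
        have hiK : i.val < K := by
          by_contra h
          exact hne (hti ▸ hteamK i (by omega))
        have h1 := hpay i τ [] i K hnd (by simp) (by rw [← huv]; rfl) (by simp) hiK hKn
        obtain ⟨m, hm⟩ := h1.exists_dec hW (i := ⟨K, hKn⟩) le_rfl
        have := hUK (α ++ (lambdaSched n K ++ List.replicate m (Event.step ⟨K, hKn⟩))) ?_
          (Bud.one le_rfl hbα (Bud.rep _ _ _)) (team i) (by simpa using hm)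
        · exact hne (hti ▸ this)
        · intro e he
          simp only [List.mem_append] at he
          rcases he with h | h | h
          · exact hαK e h
          · exact mem_lambda h
          · rw [List.eq_of_mem_replicate h]; exact le_rfl
      have : k₂.val < K := by
        by_contra h
        have := hteamK k₂ (by omega)
        rw [hk₂, hxv] at this
        cases v <;> simp at this
      omega
  · -- Two schedules starting on different teams lead to the same value.
    obtain ⟨z, ⟨i₀, τ₀, ht₀, hnd₀, hz₀⟩, i₁, τ₁, ht₁, hnd₁, hz₁⟩ :=
      Set.nonempty_iff_ne_empty.2 hdisj
    -- One of them consists of a step of the last process alone.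
    obtain ⟨p, i, τ, hp, hnd, hne, heq, hi⟩ : ∃ (p i : Fin n) (τ : List (Fin n)),
        p.val = n - 1 ∧ (i :: τ).Nodup ∧ team i ≠ team p ∧
        applyOps (A.objType O) op u [p] = applyOps (A.objType O) op u (i :: τ) ∧
        i.val < n - 1 := by
      have hlast : ∀ (i : Fin n) (τ : List (Fin n)), (i :: τ).Nodup →
          (∀ j ∈ i :: τ, ¬ j.val < n - 1) → τ = [] ∧ i.val = n - 1 := by
        intro i τ h1 h2
        have hi := h2 i (by simp)
        have hi' : i.val = n - 1 := by have := i.isLt; omega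
        refine ⟨?_, hi'⟩
        cases τ with
        | nil => rfl
        | cons j τ =>
          have hj := h2 j (by simp)
          have : j = i := Fin.ext (by have := j.isLt; omega)
          simp [this] at h1
      have hlt : ∀ i j : Fin n, i.val = n - 1 → team j ≠ team i → j.val < n - 1 := by
        intro i j h1 h2
        by_contra h
        exact h2 (congrArg team (Fin.ext (by have := j.isLt; omega)))
      by_cases h0 : ∃ j ∈ i₀ :: τ₀, j.val < n - 1
      · by_cases h1 : ∃ j ∈ i₁ :: τ₁, j.val < n - 1
        · obtain ⟨j₀, hj₀, hj₀'⟩ := h0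
          obtain ⟨j₁, hj₁, hj₁'⟩ := h1
          have hu0 := hpay i₀ τ₀ (i₀ :: τ₀) j₀ (n - 1) hnd₀ hnd₀ rfl hj₀ hj₀' (by omega)
          have hu1 := hpay i₁ τ₁ (i₀ :: τ₀) j₁ (n - 1) hnd₁ hnd₀ (by rw [← hz₀, ← hz₁]) hj₁ hj₁'
            (by omega)
          have := Uni.unique hW (by omega) hu0 hu1
          rw [ht₀, ht₁] at this
          simp at this
        · push Not at h1
          obtain ⟨rfl, h⟩ := hlast i₁ τ₁ hnd₁ (fun j hj => by have := h1 j hj; omega)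
          have hne : team i₀ ≠ team i₁ := by rw [ht₀, ht₁]; simp
          exact ⟨i₁, i₀, τ₀, h, hnd₀, hne, by rw [← hz₀, ← hz₁], hlt _ _ h hne⟩
      · push Not at h0
        obtain ⟨rfl, h⟩ := hlast i₀ τ₀ hnd₀ (fun j hj => by have := h0 j hj; omega)
        have hne : team i₁ ≠ team i₀ := by rw [ht₀, ht₁]; simp
        exact ⟨i₀, i₁, τ₁, h, hnd₁, hne, by rw [← hz₀, ← hz₁], hlt _ _ h hne⟩
    have hU := hpay i τ [p] i (n - 1) hnd (by simp) heq (by simp) hi (by omega)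
    obtain ⟨m, hm⟩ := hU.exists_dec hW (i := p) (by omega)
    refine ⟨[p], n - 1, by omega, by omega, ⟨Bud.nil _, ?_⟩, ⟨_, hU⟩, ?_⟩
    · intro w
      by_cases hw : w = team i
      · subst hw
        exact ⟨List.replicate m (Event.step p), by simpa using Bud.rep 0 m p, by simpa using hm⟩
      · -- the first process has not noticed the crash of the last one
        let p0 : Fin n := ⟨0, by omega⟩
        have hag : Agree A {p0} (run A input (initConfig A input) (δ ++ (α ++ [Event.step p])))
            (run A input (initConfig A input)
              (δ ++ (α ++ ([p].map Event.step ++ lambdaSched n (n - 1))))) := by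
          rw [hrun, hrun, run_append]
          obtain ⟨h1, -, h3⟩ := run_lambda input (run A input C ([p].map Event.step)) (n - 1)
          refine ⟨h1.symm, fun j hj => ?_⟩
          rw [Set.mem_singleton_iff] at hj
          subst hj
          exact (h3 p0 (by simp only [p0]; omega)).symm
        obtain ⟨m', y, h1, h2⟩ := transfer hW hag (β := []) (by simp) (i := p0) rfl
        have hy : y = team p := by
          refine hval p (List.replicate m' (Event.step p0)) ?_ y (by simpa using h1)
          exact (hbα.append_same (Bud.single _ _)).append_same (Bud.rep _ _ _)
        have hyw : y = w := by
          rw [hy]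
          exact bool_eq_of_ne (Ne.symm hne) hw
        subst hyw
        exact ⟨List.replicate m' (Event.step p0), by simpa using Bud.rep 0 m' p0,
          by simpa using h2⟩
    · intro K v hKn hUK hαK
      exfalso
      have hKp : K ≤ p.val := by omega
      have h1 : team p = v := by
        obtain ⟨m', y, hm'⟩ := solo (input := input) hW (δ ++ α) p
        have hd : Dec A input (δ ++ (α ++ List.replicate m' (Event.step p))) y :=
          ⟨p, _, List.prefix_rfl, by simpa using hm'⟩
        rw [← hsolo p m' y hd]
        refine hUK _ ?_ ?_ y hd
        · intro e he
          rcases List.mem_append.1 he with h | h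
          · exact hαK e h
          · rw [List.eq_of_mem_replicate h]; exact hKp
        · exact (hbα.append_same (Bud.rep _ _ _)).mono (fun _ => Nat.zero_le _)
      have h2 := hUK ((α ++ [Event.step p]) ++ (lambdaSched n (n - 1) ++
        List.replicate m (Event.step p))) ?_
        (Bud.one (by omega) (hbα.append_same (Bud.single _ _)) (Bud.rep _ _ _)) (team i)
        (by simpa using hm)
      · exact hne (h2.trans h1.symm)
      · intro e he
        simp only [List.mem_append, List.mem_singleton] at he
        rcases he with (h | h) | h | h
        · exact hαK e h
        · rw [h]; exact hKp
        · exact le_trans (by omega) (mem_lambda h)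
        · rw [List.eq_of_mem_replicate h]; exact hKp

end Necessity

end RecoverableConsensus

namespace RecoverableConsensus

section Necessity

variable {n : ℕ} {A : Algorithm n} {input : Fin n → Bool}

/-! ### A solvable consensus problem needs an `n`-recording object -/

lemma run_replicate_input (input input' : Fin n → Bool) (C : Config A) (i : Fin n) (m : ℕ) :
    run A input C (List.replicate m (Event.step i))
      = run A input' C (List.replicate m (Event.step i)) := by
  induction m generalizing C with
  | zero => rfl
  | succ m ih => exact ih _

/-- A process running alone decides its own input: it cannot exclude that all inputs are equal to
its own. -/
lemma solo_decides_input (hV : Validity A) (hW : RecWaitFree A) (i : Fin n) :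
    ∃ m, Dec A input (List.replicate m (Event.step i)) (input i) := by
  obtain ⟨m, v, hm⟩ := solo (input := input) hW [] i
  rw [List.nil_append] at hm
  have hag : Agree A {i} (initConfig A input) (initConfig A (fun _ => input i)) :=
    ⟨rfl, fun j hj => by rw [Set.mem_singleton_iff] at hj; subst hj; rfl⟩
  have hrun := (hag.run input (β := List.replicate m (Event.step i))
    (fun e he => by rw [List.eq_of_mem_replicate he]; rfl)).2 i rfl
  rw [run_replicate_input input (fun _ => input i) (initConfig A fun _ => input i)] at hrun
  obtain ⟨j, hj⟩ := hV (fun _ => input i) (List.replicate m (Event.step i)) i v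
    ⟨_, List.prefix_rfl, hrun ▸ hm⟩
  refine ⟨m, i, _, List.prefix_rfl, ?_⟩
  rw [hm, ← hj]

/-- If no object were `n`-recording, the prolongation of critical executions could be iterated
forever, and the lowest process taking infinitely many steps in the limit would crash only
finitely often without ever deciding. -/
lemma exists_recording (hn : 1 < n) (hA : Agreement A) (hV : Validity A) (hW : RecWaitFree A) :
    ∃ O, NRecording n (A.objType O) := by
  classical
  by_contra hrec
  push Not at hrec
  let input : Fin n → Bool := fun i => decide (i.val ≠ 0)
  have hbiv : Biv A input [] [] := by
    refine ⟨Bud.nil _, fun v => ?_⟩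
    cases v with
    | false =>
      obtain ⟨m, hm⟩ := solo_decides_input (input := input) hV hW ⟨0, by omega⟩
      exact ⟨List.replicate m (Event.step ⟨0, by omega⟩), by simpa using Bud.rep 0 m _,
        by simpa [input] using hm⟩
    | true =>
      obtain ⟨m, hm⟩ := solo_decides_input (input := input) hV hW ⟨1, by omega⟩
      exact ⟨List.replicate m (Event.step ⟨1, by omega⟩), by simpa using Bud.rep 0 m _,
        by simpa [input] using hm⟩
  let Stage := {p : List (Event n) × ℕ //
    Biv A input p.1 [] ∧ p.2 < n ∧ ∃ v, Uni A input p.2 p.1 v}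
  have hnext : ∀ s : Stage, ∃ (s' : Stage) (α : List (Event n)) (l : List (Fin n)),
      s'.1.1 = s.1.1 ++ (α ++ (l.map Event.step ++ lambdaSched n s'.1.2)) ∧ Bud 0 α ∧
      ((∀ e ∈ α, s.1.2 ≤ e.proc.val) → s'.1.2 < s.1.2) := by
    intro s
    obtain ⟨α, hα⟩ := exists_crit hA hW s.2.1
    obtain ⟨l, K, -, hKn, hb, hu, hK⟩ := next_stage hn hA hW hrec hα
    obtain ⟨v, hv⟩ := s.2.2.2
    exact ⟨⟨(_, K), hb, hKn, hu⟩, α, l, rfl, hα.1.1, hK _ v s.2.2.1 hv⟩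
  have hstart : Nonempty Stage := by
    obtain ⟨α, hα⟩ := exists_crit hA hW hbiv
    obtain ⟨l, K, -, hKn, hb, hu, hK⟩ := next_stage hn hA hW hrec hα
    exact ⟨⟨(_, K), hb, hKn, hu⟩⟩
  obtain ⟨s₀⟩ := hstart
  choose nxt ac lc hδ hbud hdrop using hnext
  let f : ℕ → Stage := fun t => Nat.rec s₀ (fun _ s => nxt s) t
  have hf : ∀ t, f (t + 1) = nxt (f t) := fun t => rfl
  let δ : ℕ → List (Event n) := fun t => (f t).1.1
  let K : ℕ → ℕ := fun t => (f t).1.2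
  let α : ℕ → List (Event n) := fun t => ac (f t)
  have hδ' : ∀ t, δ (t + 1)
      = δ t ++ (α t ++ ((lc (f t)).map Event.step ++ lambdaSched n (K (t + 1)))) :=
    fun t => hδ (f t)
  have hpre : ∀ t, δ t <+: δ (t + 1) := fun t => by
    rw [hδ' t]; exact List.prefix_append _ _
  have hmono : ∀ s t, s ≤ t → δ s <+: δ t := by
    intro s t hst
    induction t, hst using Nat.le_induction with
    | base => exact List.prefix_rfl
    | succ t _ ih => exact ih.trans (hpre t)
  -- `k` is the limit inferior of `K`
  have hex : ∃ k, ∀ T, ∃ t, T ≤ t ∧ K t ≤ k := ⟨n, fun T => ⟨T, le_rfl, (f T).2.2.1.le⟩⟩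
  obtain ⟨k, hk, hkmin⟩ : ∃ k, (∀ T, ∃ t, T ≤ t ∧ K t ≤ k) ∧
      ∀ m < k, ¬ ∀ T, ∃ t, T ≤ t ∧ K t ≤ m :=
    ⟨Nat.find hex, Nat.find_spec hex, fun m hm => Nat.find_min hex hm⟩
  obtain ⟨T₀, hT₀⟩ : ∃ T₀, ∀ t, T₀ ≤ t → k ≤ K t := by
    cases k with
    | zero => exact ⟨0, fun t _ => Nat.zero_le _⟩
    | succ k =>
      have := hkmin k (by omega)
      push Not at this
      obtain ⟨T, hT⟩ := this
      exact ⟨T, fun t ht => hT t ht⟩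
  have hstep : ∃ᶠ t in Filter.atTop, ∃ j : Fin n, j.val < k ∧ Event.step j ∈ α t := by
    rw [Filter.frequently_atTop]
    intro T
    obtain ⟨t, ht, hKt⟩ := hk (max T T₀)
    refine ⟨t, by omega, ?_⟩
    have h1 : k ≤ K (t + 1) := hT₀ (t + 1) (by omega)
    have h2 : ¬ ∀ e ∈ α t, K t ≤ e.proc.val := fun h => by
      have : K (t + 1) < K t := hdrop (f t) h
      omega
    push Not at h2
    obtain ⟨e, he, hlt⟩ := h2
    cases e with
    | step j => exact ⟨j, by simp only [Event.proc] at hlt; omega, he⟩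
    | crash j =>
      -- a crash has been paid for by a step of a lower process
      simp only [Event.proc] at hlt
      have h3 := (hbud (f t)).self j
      have h4 : 0 < cr j (ac (f t)) := List.count_pos_iff.2 he
      have h5 : 0 < sb j (ac (f t)) := by simp only [Pi.zero_apply] at h3; omega
      obtain ⟨e, he, hb⟩ := List.countP_pos_iff.1 h5
      cases e with
      | crash i => simp [isStepBelow] at hb
      | step i =>
        simp only [isStepBelow, decide_eq_true_eq] at hb
        exact ⟨i, by have := Fin.lt_def.1 hb; omega, he⟩
  obtain ⟨j, hj⟩ : ∃ j : Fin n, ∃ᶠ t in Filter.atTop, j.val < k ∧ Event.step j ∈ α t := by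
    by_contra hcon
    push Not at hcon
    have := Filter.eventually_all.2 hcon
    exact hstep (this.mono fun t ht ⟨j, h1, h2⟩ => ht j h1 h2)
  rw [Filter.frequently_atTop] at hj
  have hjk : j.val < k := (hj 0).choose_spec.2.1
  have hunb : ∀ M, ∃ t, M ≤ (δ t).count (Event.step j) := by
    intro M
    induction M with
    | zero => exact ⟨0, Nat.zero_le _⟩
    | succ M ih =>
      obtain ⟨t, ht⟩ := ih
      obtain ⟨t', htt', -, hmem⟩ := hj t
      refine ⟨t' + 1, ?_⟩
      have h1 := (hmono t t' htt').count_le (Event.step j)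
      have h2 : 0 < (α t').count (Event.step j) := List.count_pos_iff.2 hmem
      rw [hδ' t']
      simp only [List.count_append]
      omega
  obtain ⟨i, hij, hi, N, hN⟩ := exists_lowest (L := δ) hunb
  refine limit (input := input) hW δ hpre ?_ i hi ⟨cr i (δ T₀) + 2 * N, ?_⟩
  · intro t v
    have := (f t).2.1.undecided hA v
    rwa [List.append_nil] at this
  · intro t
    rcases le_total t T₀ with ht | ht
    · have := (hmono t T₀ ht).count_le (Event.crash i)
      simp only [cr]
      omega
    · have key : cr i (δ t) + 2 * sb i (δ T₀) ≤ cr i (δ T₀) + 2 * sb i (δ t) := by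
        induction t, ht using Nat.le_induction with
        | base => exact le_rfl
        | succ t ht ih =>
          have h1 := (hbud (f t)).self i
          have h2 := cr_steps (lc (f t)) i
          have h3 : cr i (lambdaSched n (K (t + 1))) = 0 := by
            have h4 := cr_lambda_le (K (t + 1)) i
            have h5 := hT₀ (t + 1) (by omega)
            have h6 := Fin.le_def.1 hij
            rw [slack, if_neg (by omega)] at h4
            omega
          rw [hδ' t]
          simp only [cr, sb, List.count_append, List.countP_append, Pi.zero_apply, α] at *
          omega
      have := hN t
      omega

lemma not_recording_register (V : Type) : ¬ NRecording n (RegisterType V) := by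
  rintro ⟨u, team, o, hboth, hdisj, -⟩
  obtain ⟨i, hi⟩ := hboth false
  obtain ⟨j, hj⟩ := hboth true
  have hij : i ≠ j := fun h => by rw [h, hj] at hi; simp at hi
  have hcon : ∀ z, z ∈ UVals (RegisterType V) o u team false →
      z ∈ UVals (RegisterType V) o u team true → False := by
    intro z h1 h2
    have : z ∈ UVals (RegisterType V) o u team false ∩ UVals (RegisterType V) o u team true :=
      ⟨h1, h2⟩
    rw [hdisj] at this
    exact this
  cases hoi : o i with
  | some a =>
    refine hcon a ⟨i, [], hi, by simp, ?_⟩ ⟨j, [i], hj, by simp [hij.symm], ?_⟩ <;>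
      simp [applyOps, RegisterType, hoi]
  | none =>
    cases hoj : o j with
    | some b =>
      refine hcon b ⟨i, [j], hi, by simp [hij], ?_⟩ ⟨j, [], hj, by simp, ?_⟩ <;>
        simp [applyOps, RegisterType, hoj]
    | none =>
      refine hcon u ⟨i, [], hi, by simp, ?_⟩ ⟨j, [], hj, by simp, ?_⟩ <;>
        simp [applyOps, RegisterType, hoi, hoj] <;> rfl

end Necessity

end RecoverableConsensus

namespace RecoverableConsensus

/-! ### The tournament algorithm -/

/-- A readable `n`-recording type, together with a binary tournament among the processes: `path d p`
is the node of depth `d` on the way of `p` from the root to its leaf, and `role d p` is the role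
(index of the recording operation) that `p` plays there. The processes meeting at a node play
different roles, they go to different children if their roles are on different teams, and leaves
are not shared. -/
structure Setup (n : ℕ) (T : DetType) where
  read : T.Op
  ι : T.Value → T.Resp
  ι_inj : Function.Injective ι
  δ_read : ∀ v, T.δ v read = (ι v, v)
  u : T.Value
  team : Fin n → Bool
  o : Fin n → T.Op
  disj : ∀ z x, z ∈ UVals T o u team x → z ∈ UVals T o u team (!x) → False
  uniq : ∀ x, u ∈ UVals T o u team x → ∀ i j, team i = (!x) → team j = (!x) → i = j
  path : ℕ → Fin n → List Bool
  role : ℕ → Fin n → Fin n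
  path_zero : ∀ p q, path 0 p = path 0 q
  role_inj : ∀ d p q, path d p = path d q → role d p = role d q → p = q
  path_succ : ∀ d p q, path d p = path d q → team (role d p) = team (role d q) →
    path (d + 1) p = path (d + 1) q
  path_last : ∀ p q, path n p = path n q → p = q

/-- The phases of a process at a node: announce the own value in the register of the own team, read
the object, check the register of the other team, apply the recording operation, read the object
again, fetch the value announced by the winning team. -/
inductive Phase : Type where
  | announce
  | look
  | check
  | record
  | relook
  | fetch (y : Bool)

/-- The state of a process: decided, or at the node of depth `d` with the value `v`. -/
inductive St : Type where
  | done (w : Bool)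
  | busy (d : ℕ) (v : Bool) (ph : Phase)

/-- The nodes of the tournament, with their depth. -/
abbrev Node : Type := ℕ × List Bool

namespace Setup

variable {n : ℕ} {T : DetType} (S : Setup n T)

/-- The values recording that team `x` went first. -/
abbrev Q (x : Bool) : Set T.Value := UVals T S.o S.u S.team x

/-- The node of `p` at depth `d`. -/
abbrev loc (d : ℕ) (p : Fin n) : Node := (d, S.path d p)

/-- The team of `p` at depth `d`. -/
abbrev tm (d : ℕ) (p : Fin n) : Bool := S.team (S.role d p)

/-- Leave a node of depth `d` with the value `w`. -/
def ret : ℕ → Bool → St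
  | 0, w => .done w
  | d + 1, w => .busy d w .announce

open scoped Classical in
/-- The team recorded by the value read. -/
noncomputable def cls (r : T.Resp) : Bool := decide (∃ z ∈ S.Q true, r = S.ι z)

open scoped Classical in
/-- The state after a step on a recording object. -/
noncomputable def nextT (p : Fin n) : St → T.Resp → St
  | .busy d v .look, r =>
    if r = S.ι S.u then
      if S.u ∈ S.Q (!S.tm d p) then .busy d v .check else .busy d v .record
    else .busy d v (.fetch (S.cls r))
  | .busy d v .record, _ => .busy d v .relook
  | .busy d v .relook, r => .busy d v (.fetch (S.cls r))
  | s, _ => s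

/-- The state after a step on a register. -/
def nextR : St → Option Bool → St
  | .busy d v .announce, _ => .busy d v .look
  | .busy d _ .check, some w => ret d w
  | .busy d v .check, none => .busy d v .record
  | .busy d v (.fetch _), r => ret d (r.getD v)
  | s, _ => s

/-- Each node has one object of type `T` and one register for each team. -/
def objT : Node × Option Bool → DetType
  | (_, none) => T
  | (_, some _) => RegisterType (Option Bool)

/-- The next step of a process. -/
def pend (p : Fin n) : St → Option ((i : Node × Option Bool) × (objT (T := T) i).Op)
  | .done _ => none
  | .busy d v .announce => some ⟨(S.loc d p, some (S.tm d p)), (some (some v) : Option (Option Bool))⟩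
  | .busy d _ .look => some ⟨(S.loc d p, none), S.read⟩
  | .busy d _ .check => some ⟨(S.loc d p, some (!S.tm d p)), (none : Option (Option Bool))⟩
  | .busy d _ .record => some ⟨(S.loc d p, none), S.o (S.role d p)⟩
  | .busy d _ .relook => some ⟨(S.loc d p, none), S.read⟩
  | .busy d _ (.fetch y) => some ⟨(S.loc d p, some y), (none : Option (Option Bool))⟩

/-- The tournament: a process ascends from its leaf to the root. At each node it takes part, with the
value it brings from below, in a consensus between the two teams, of which each brings a single
value. -/
noncomputable def alg : Algorithm n where
  ObjIdx := Node × Option Bool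
  objType := objT (T := T)
  objInit := fun i => match i with
    | (_, none) => S.u
    | (_, some _) => (none : Option Bool)
  PState := fun _ => St
  init := fun _ b => .busy (n - 1) b .announce
  pending := S.pend
  next := fun p s i => match i with
    | (_, none) => fun r => S.nextT p s r
    | (_, some _) => fun r => nextR s r
  output := fun _ s => match s with
    | .done w => some w
    | .busy _ _ _ => none
  output_noop := by
    intro i s h
    cases s with
    | done w => rfl
    | busy d v ph => exact absurd rfl h

/-- The states of the processes. -/
def ps (C : Config S.alg) : Fin n → St := fun i => C.pstate i

/-- The values of the recording objects. -/
def ob (C : Config S.alg) : Node → T.Value := fun nd => C.oval (nd, none)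

/-- The values of the registers. -/
def rg (C : Config S.alg) : Node → Bool → Option Bool := fun nd x => C.oval (nd, some x)

variable {S}

open scoped Classical in
lemma step_obj (input : Fin n → Bool) {C : Config S.alg} {p : Fin n} {nd : Node} {op : T.Op}
    (h : S.pend p (S.ps C p) = some ⟨(nd, none), op⟩) :
    S.ps (applyEvent S.alg input C (.step p)) =
      Function.update (S.ps C) p (S.nextT p (S.ps C p) (T.δ (S.ob C nd) op).1) ∧
    S.ob (applyEvent S.alg input C (.step p)) =
      Function.update (S.ob C) nd (T.δ (S.ob C nd) op).2 ∧
    S.rg (applyEvent S.alg input C (.step p)) = S.rg C := by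
  have h' : S.alg.pending p (C.pstate p) = some ⟨(nd, none), op⟩ := h
  rw [applyEvent_some input h']
  refine ⟨?_, ?_, ?_⟩
  · funext q
    by_cases hq : q = p
    · subst hq
      simp only [ps, Function.update_self]
      rfl
    · simp only [ps, Function.update_of_ne hq]
      rfl
  · funext nd'
    by_cases hq : nd' = nd
    · subst hq
      simp only [ob, Function.update_self]
      exact Function.update_self (α := S.alg.ObjIdx) _ _ _
    · have : @Ne S.alg.ObjIdx (nd', none) (nd, none) := by intro h; injection h; simp_all
      simp only [ob, Function.update_of_ne hq]
      exact Function.update_of_ne this _ _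
  · funext nd' x
    have : @Ne S.alg.ObjIdx (nd', some x) (nd, none) := by intro h; injection h; simp_all
    simp only [rg]
    exact Function.update_of_ne this _ _

open scoped Classical in
lemma step_reg (input : Fin n → Bool) {C : Config S.alg} {p : Fin n} {nd : Node} {x : Bool}
    {op : Option (Option Bool)}
    (h : S.pend p (S.ps C p) = some ⟨(nd, some x), op⟩) :
    S.ps (applyEvent S.alg input C (.step p)) =
      Function.update (S.ps C) p (nextR (S.ps C p) (op.getD (S.rg C nd x))) ∧
    S.ob (applyEvent S.alg input C (.step p)) = S.ob C ∧
    S.rg (applyEvent S.alg input C (.step p)) = Function.update (S.rg C) nd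
      (Function.update (S.rg C nd) x (op.getD (S.rg C nd x))) := by
  have h' : S.alg.pending p (C.pstate p) = some ⟨(nd, some x), op⟩ := h
  rw [applyEvent_some input h']
  refine ⟨?_, ?_, ?_⟩
  · funext q
    by_cases hq : q = p
    · subst hq
      simp only [ps, Function.update_self]
      cases op <;> rfl
    · simp only [ps, Function.update_of_ne hq]
      rfl
  · funext nd'
    have : @Ne S.alg.ObjIdx (nd', none) (nd, some x) := by intro h; injection h; simp_all
    simp only [ob]
    exact Function.update_of_ne this _ _
  · funext nd' x'
    by_cases hq : nd' = nd
    · subst hq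
      by_cases hx : x' = x
      · subst hx
        simp only [rg, Function.update_self]
        cases op <;> exact Function.update_self (α := S.alg.ObjIdx) _ _ _
      · have : @Ne S.alg.ObjIdx (nd', some x') (nd', some x) := by intro h; injection h; simp_all
        simp only [rg, Function.update_self, Function.update_of_ne hx]
        exact Function.update_of_ne this _ _
    · have : @Ne S.alg.ObjIdx (nd', some x') (nd, some x) := by intro h; injection h; simp_all
      simp only [rg, Function.update_of_ne hq]
      exact Function.update_of_ne this _ _

lemma step_read (input : Fin n → Bool) {C : Config S.alg} {p : Fin n} {nd : Node} {x : Bool}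
    (h : S.pend p (S.ps C p) = some ⟨(nd, some x), (none : Option (Option Bool))⟩) :
    S.ps (applyEvent S.alg input C (.step p)) =
      Function.update (S.ps C) p (nextR (S.ps C p) (S.rg C nd x)) ∧
    S.ob (applyEvent S.alg input C (.step p)) = S.ob C ∧
    S.rg (applyEvent S.alg input C (.step p)) = S.rg C := by
  obtain ⟨h1, h2, h3⟩ := step_reg input h
  refine ⟨h1, h2, ?_⟩
  rw [h3]
  simp

lemma step_look (input : Fin n → Bool) {C : Config S.alg} {p : Fin n} {nd : Node}
    (h : S.pend p (S.ps C p) = some ⟨(nd, none), S.read⟩) :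
    S.ps (applyEvent S.alg input C (.step p)) =
      Function.update (S.ps C) p (S.nextT p (S.ps C p) (S.ι (S.ob C nd))) ∧
    S.ob (applyEvent S.alg input C (.step p)) = S.ob C ∧
    S.rg (applyEvent S.alg input C (.step p)) = S.rg C := by
  obtain ⟨h1, h2, h3⟩ := step_obj input h
  rw [S.δ_read] at h1 h2
  refine ⟨h1, ?_, h3⟩
  rw [h2]
  simp

lemma crash_eq (input : Fin n → Bool) (C : Config S.alg) (p : Fin n) :
    S.ps (applyEvent S.alg input C (.crash p)) =
      Function.update (S.ps C) p (.busy (n - 1) (input p) .announce) ∧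
    S.ob (applyEvent S.alg input C (.crash p)) = S.ob C ∧
    S.rg (applyEvent S.alg input C (.crash p)) = S.rg C := by
  refine ⟨?_, rfl, rfl⟩
  funext q
  by_cases hq : q = p
  · subst hq
    simp only [ps, applyEvent, Function.update_self]
    rfl
  · simp only [ps, applyEvent, Function.update_of_ne hq]
    rfl

end Setup

end RecoverableConsensus

namespace RecoverableConsensus

namespace Setup

variable {n : ℕ} {T : DetType} (S : Setup n T) (input : Fin n → Bool)

/-! ### The invariant of the tournament -/

section Defs

variable (rg : Node → Bool → Option Bool) (win : Node → Option Bool) (seg : Node → List (Fin n))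

/-- `v` is the outcome of the consensus at the node of `p` at depth `d`, where `win` gives the winning
teams; at a leaf, the outcome is the input of its process. -/
def Out (d : ℕ) (p : Fin n) (v : Bool) : Prop :=
  (d = n ∧ v = input p) ∨
    (d < n ∧ ∃ y, win (S.loc d p) = some y ∧ rg (S.loc d p) y = some v)

/-- What is known about a node while `p` is there. A process about to record is not in `seg`, the
roles recorded since the object last had its initial value; if the other team has won, then something
is recorded. -/
def PhC (d : ℕ) (p : Fin n) : Phase → Prop
  | .announce => True
  | .look => rg (S.loc d p) (S.tm d p) ≠ none
  | .check => rg (S.loc d p) (S.tm d p) ≠ none ∧ S.role d p ∉ seg (S.loc d p) ∧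
      S.u ∈ S.Q (!S.tm d p) ∧ win (S.loc d p) ≠ some (S.tm d p)
  | .record => rg (S.loc d p) (S.tm d p) ≠ none ∧ S.role d p ∉ seg (S.loc d p) ∧
      (win (S.loc d p) = some (!S.tm d p) → seg (S.loc d p) ≠ [])
  | .relook => win (S.loc d p) ≠ none
  | .fetch y => win (S.loc d p) = some y

/-- The invariant for a single process. -/
def PC (p : Fin n) : St → Prop
  | .done w => Out S input rg win 0 p w
  | .busy d v ph => d < n ∧ Out S input rg win (d + 1) p v ∧ PhC S rg win seg d p ph

/-- The invariant. The auxiliary variables are, for each node, the winning team `win` and the list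
`seg` of the roles recorded since the object last had its initial value. -/
structure Good (ps : Fin n → St) (ob : Node → T.Value) : Prop where
  obj : ∀ nd, ob nd = applyOps T S.o S.u (seg nd)
  nodup : ∀ nd, (seg nd).Nodup
  fresh : ∀ nd, ob nd = S.u → seg nd = []
  win_none : ∀ nd, win nd = none → seg nd = []
  win_some : ∀ nd x, win nd = some x → rg nd x ≠ none ∧
    ((seg nd = [] ∧ S.u ∈ S.Q x) ∨ ∃ i τ, seg nd = i :: τ ∧ S.team i = x)
  reg : ∀ nd x w, rg nd x = some w → ∃ d p, d < n ∧ nd = S.loc d p ∧ S.tm d p = x ∧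
    Out S input rg win (d + 1) p w
  proc : ∀ p, PC S input rg win seg p (ps p)

end Defs

variable {S input} {rg : Node → Bool → Option Bool} {win : Node → Option Bool}
  {seg : Node → List (Fin n)} {ps : Fin n → St} {ob : Node → T.Value}

lemma Out.unique {d : ℕ} {p : Fin n} {v w : Bool} (h : Out S input rg win d p v)
    (h' : Out S input rg win d p w) : v = w := by
  rcases h with ⟨h1, h2⟩ | ⟨h1, y, h2, h3⟩ <;> rcases h' with ⟨h1', h2'⟩ | ⟨h1', y', h2', h3'⟩
  · rw [h2, h2']
  · omega
  · omega
  · rw [h2] at h2'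
    cases h2'
    rw [h3] at h3'
    exact Option.some.inj h3'

/-- The outcome depends on the node only. -/
lemma Out.congr {d : ℕ} {p q : Fin n} {v : Bool} (h : Out S input rg win d p v)
    (hpq : S.path d p = S.path d q) : Out S input rg win d q v := by
  rcases h with ⟨h1, h2⟩ | h
  · subst h1
    rw [S.path_last p q hpq] at h2
    exact Or.inl ⟨rfl, h2⟩
  · refine Or.inr ?_
    simp only [loc] at *
    rwa [← hpq]

lemma Out.mono {rg' : Node → Bool → Option Bool} {win' : Node → Option Bool}
    (hr : ∀ nd x w, rg nd x = some w → rg' nd x = some w)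
    (hw : ∀ nd x, win nd = some x → win' nd = some x) {d : ℕ} {p : Fin n} {v : Bool}
    (h : Out S input rg win d p v) : Out S input rg' win' d p v := by
  rcases h with h | ⟨h1, y, h2, h3⟩
  · exact Or.inl h
  · exact Or.inr ⟨h1, y, hw _ _ h2, hr _ _ _ h3⟩

lemma Good.ob_mem (h : Good S input rg win seg ps ob) {nd : Node} {x : Bool}
    (hw : win nd = some x) : ob nd ∈ S.Q x := by
  rw [h.obj nd]
  rcases (h.win_some nd x hw).2 with ⟨h1, h2⟩ | ⟨i, τ, h1, h2⟩
  · rw [h1]; exact h2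
  · have := h.nodup nd
    rw [h1] at this ⊢
    exact ⟨i, τ, h2, this, rfl⟩

/-- The value of an object with a winning team records that team. -/
lemma Good.cls_eq (h : Good S input rg win seg ps ob) {nd : Node} {x : Bool}
    (hw : win nd = some x) : S.cls (S.ι (ob nd)) = x := by
  classical
  have hm := h.ob_mem hw
  cases x with
  | true => exact decide_eq_true ⟨_, hm, rfl⟩
  | false =>
    refine decide_eq_false ?_
    rintro ⟨z, hz, hze⟩
    rw [← S.ι_inj hze] at hz
    exact S.disj _ _ hm hz

lemma Good.update (h : Good S input rg win seg ps ob) {p : Fin n} {s : St}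
    (hs : PC S input rg win seg p s) : Good S input rg win seg (Function.update ps p s) ob := by
  refine { h with proc := fun q => ?_ }
  by_cases hq : q = p
  · subst hq; rwa [Function.update_self]
  · rw [Function.update_of_ne hq]; exact h.proc q

lemma pc_ret {d : ℕ} {p : Fin n} {w : Bool} (hd : d < n) (h : Out S input rg win d p w) :
    PC S input rg win seg p (ret d w) := by
  cases d with
  | zero => exact h
  | succ d => exact ⟨by omega, h, trivial⟩

lemma Good.out_input (h : Good S input rg win seg ps ob) {d : ℕ} {p : Fin n} {v : Bool}
    (hd : d ≤ n) (ho : Out S input rg win d p v) : ∃ j, input j = v := by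
  induction hd using Nat.decreasingInduction generalizing p with
  | self =>
    rcases ho with ⟨-, h2⟩ | ⟨h1, -⟩
    · exact ⟨p, h2.symm⟩
    · omega
  | of_succ d hd ih =>
    rcases ho with ⟨h1, -⟩ | ⟨-, y, -, h3⟩
    · omega
    · obtain ⟨d', p', -, hnd, -, ho'⟩ := h.reg _ _ _ h3
      simp only [loc, Prod.mk.injEq] at hnd
      obtain ⟨rfl, -⟩ := hnd
      exact ih ho'

/-- Announcing a value only repeats what a process of the same team may have announced before. -/
lemma Good.announce (h : Good S input rg win seg ps ob) {p : Fin n} {d : ℕ} {v : Bool}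
    (hp : ps p = .busy d v .announce) :
    let rg' := Function.update rg (S.loc d p) (Function.update (rg (S.loc d p)) (S.tm d p) (some v))
    Good S input rg' win seg (Function.update ps p (.busy d v .look)) ob ∧
    (∀ nd x w, rg nd x = some w → rg' nd x = some w) := by
  intro rg'
  have hpc := h.proc p
  rw [hp] at hpc
  obtain ⟨hd, hout, -⟩ := hpc
  have hself : rg' (S.loc d p) (S.tm d p) = some v := by simp [rg']
  have hother : ∀ nd x, ¬ (nd = S.loc d p ∧ x = S.tm d p) → rg' nd x = rg nd x := by
    intro nd x hne
    by_cases h1 : nd = S.loc d p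
    · subst h1
      have h2 : x ≠ S.tm d p := fun h => hne ⟨rfl, h⟩
      simp [rg', h2]
    · simp [rg', h1]
  have hr : ∀ nd x w, rg nd x = some w → rg' nd x = some w := by
    intro nd x w hw
    by_cases hcase : nd = S.loc d p ∧ x = S.tm d p
    · obtain ⟨rfl, rfl⟩ := hcase
      obtain ⟨d', p', -, hnd, ht, ho⟩ := h.reg _ _ _ hw
      simp only [loc, Prod.mk.injEq] at hnd
      obtain ⟨rfl, hpath⟩ := hnd
      have := (ho.congr (S.path_succ d p' p hpath.symm ht)).unique hout
      rw [hself, this]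
    · rw [hother nd x hcase, hw]
  have hr' : ∀ nd x, rg nd x ≠ none → rg' nd x ≠ none := by
    intro nd x hne
    obtain ⟨w, hw⟩ := Option.ne_none_iff_exists'.1 hne
    rw [hr _ _ _ hw]
    simp
  have hmono : ∀ {d p v}, Out S input rg win d p v → Out S input rg' win d p v :=
    fun ho => ho.mono hr (fun _ _ h => h)
  refine ⟨⟨h.obj, h.nodup, h.fresh, h.win_none, fun nd x hw => ?_, fun nd x w hw => ?_,
    fun q => ?_⟩, hr⟩
  · exact ⟨hr' _ _ (h.win_some nd x hw).1, (h.win_some nd x hw).2⟩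
  · by_cases hcase : nd = S.loc d p ∧ x = S.tm d p
    · obtain ⟨rfl, rfl⟩ := hcase
      rw [hself] at hw
      cases hw
      exact ⟨d, p, hd, rfl, rfl, hmono hout⟩
    · rw [hother nd x hcase] at hw
      obtain ⟨d', p', h1, h2, h3, h4⟩ := h.reg _ _ _ hw
      exact ⟨d', p', h1, h2, h3, hmono h4⟩
  · by_cases hq : q = p
    · subst hq
      rw [Function.update_self]
      refine ⟨hd, hmono hout, ?_⟩
      change rg' (S.loc d q) (S.tm d q) ≠ none
      rw [hself]
      simp
    · rw [Function.update_of_ne hq]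
      have hqc := h.proc q
      cases hs : ps q with
      | done w => rw [hs] at hqc; exact hmono hqc
      | busy d' v' ph =>
        rw [hs] at hqc
        obtain ⟨h1, h2, h3⟩ := hqc
        refine ⟨h1, hmono h2, ?_⟩
        cases ph with
        | announce => trivial
        | look => exact hr' _ _ h3
        | check => exact ⟨hr' _ _ h3.1, h3.2⟩
        | record => exact ⟨hr' _ _ h3.1, h3.2⟩
        | relook => exact h3
        | fetch y => exact h3

/-- A process that finds a value of the other team, although nothing is recorded, concedes. If no
team has won, the other team is declared the winner: the conceding process is the only one of its
team. -/
lemma Good.concede (h : Good S input rg win seg ps ob) {p : Fin n} {d : ℕ} {v w : Bool}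
    (hp : ps p = .busy d v .check) (hw : rg (S.loc d p) (!S.tm d p) = some w) :
    let win' := Function.update win (S.loc d p) (some (!S.tm d p))
    Good S input rg win' seg (Function.update ps p (ret d w)) ob ∧
    (∀ nd x, win nd = some x → win' nd = some x) := by
  intro win'
  have hpc := h.proc p
  rw [hp] at hpc
  obtain ⟨hd, hout, hrg, hseg, hu, hwin⟩ := hpc
  have hself : win' (S.loc d p) = some (!S.tm d p) := by simp [win']
  have hother : ∀ nd, nd ≠ S.loc d p → win' nd = win nd := by
    intro nd hne
    simp [win', hne]
  have hwin' : win (S.loc d p) = none ∨ win (S.loc d p) = some (!S.tm d p) := by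
    cases hw' : win (S.loc d p) with
    | none => exact Or.inl rfl
    | some y =>
      right
      rw [hw'] at hwin
      have : y ≠ S.tm d p := fun h => hwin (by rw [h])
      rw [Bool.eq_not_of_ne this]
  have hwm : ∀ nd x, win nd = some x → win' nd = some x := by
    intro nd x hx
    by_cases hnd : nd = S.loc d p
    · subst hnd
      rcases hwin' with h' | h'
      · rw [h'] at hx; cases hx
      · rw [hself, ← h', hx]
    · rw [hother nd hnd, hx]
  have hmono : ∀ {d p v}, Out S input rg win d p v → Out S input rg win' d p v :=
    fun ho => ho.mono (fun _ _ _ h => h) hwm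
  refine ⟨⟨h.obj, h.nodup, h.fresh, fun nd hn => ?_, fun nd x hx => ?_, fun nd x w hw => ?_,
    fun q => ?_⟩, hwm⟩
  · by_cases hnd : nd = S.loc d p
    · subst hnd; rw [hself] at hn; cases hn
    · rw [hother nd hnd] at hn; exact h.win_none nd hn
  · by_cases hnd : nd = S.loc d p
    · subst hnd
      rcases hwin' with h' | h'
      · rw [hself] at hx
        cases hx
        exact ⟨by rw [hw]; simp, Or.inl ⟨h.win_none _ h', hu⟩⟩
      · rw [hself, ← h'] at hx
        exact h.win_some _ _ hx
    · rw [hother nd hnd] at hx; exact h.win_some nd x hx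
  · obtain ⟨d', p', h1, h2, h3, h4⟩ := h.reg _ _ _ hw
    exact ⟨d', p', h1, h2, h3, hmono h4⟩
  · by_cases hq : q = p
    · subst hq
      rw [Function.update_self]
      exact pc_ret hd (Or.inr ⟨hd, _, hself, hw⟩)
    · rw [Function.update_of_ne hq]
      have hqc := h.proc q
      cases hs : ps q with
      | done w => rw [hs] at hqc; exact hmono hqc
      | busy d' v' ph =>
        rw [hs] at hqc
        obtain ⟨h1, h2, h3⟩ := hqc
        refine ⟨h1, hmono h2, ?_⟩
        by_cases hnd : S.loc d' q = S.loc d p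
        · have hnd' := hnd
          simp only [loc, Prod.mk.injEq] at hnd'
          obtain ⟨rfl, hpath⟩ := hnd'
          have htm : S.tm d' q ≠ S.tm d' p := by
            intro ht
            refine hq (S.role_inj d' q p hpath ?_)
            refine S.uniq _ hu _ _ ?_ ?_
            · rw [Bool.not_not]; exact ht
            · rw [Bool.not_not]
          have htm' : S.tm d' q = !S.tm d' p := Bool.eq_not_of_ne htm
          cases ph with
          | announce => trivial
          | look => exact h3
          | check =>
            obtain ⟨-, -, hu', -⟩ := h3
            rw [htm', Bool.not_not] at hu'
            exact (S.disj _ _ hu' hu).elim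
          | record =>
            refine ⟨h3.1, h3.2.1, fun hx => ?_⟩
            rw [hnd, hself, htm'] at hx
            simp at hx
          | relook =>
            change win' (S.loc d' q) ≠ none
            rw [hnd, hself]; simp
          | fetch y => exact hwm _ _ h3
        · cases ph with
          | announce => trivial
          | look => exact h3
          | check => simpa only [PhC, hother _ hnd] using h3
          | record => simpa only [PhC, hother _ hnd] using h3
          | relook => simpa only [PhC, hother _ hnd] using h3
          | fetch y => simpa only [PhC, hother _ hnd] using h3

open scoped Classical in
/-- The first operation recorded at a node determines the winning team. When an operation restores
the initial value, no process of the losing team can be about to record: otherwise the value recorded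
next would belong to both teams. -/
lemma Good.record (h : Good S input rg win seg ps ob) {p : Fin n} {d : ℕ} {v : Bool}
    (hp : ps p = .busy d v .record) :
    ∃ (win' : Node → Option Bool) (seg' : Node → List (Fin n)),
    Good S input rg win' seg' (Function.update ps p (.busy d v .relook))
      (Function.update ob (S.loc d p) (T.δ (ob (S.loc d p)) (S.o (S.role d p))).2) ∧
    (∀ nd x, win nd = some x → win' nd = some x) := by
  have hpc := h.proc p
  rw [hp] at hpc
  obtain ⟨hd, hout, hrg, hseg, hlose⟩ := hpc
  set z := (T.δ (ob (S.loc d p)) (S.o (S.role d p))).2 with hz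
  have hz' : z = applyOps T S.o S.u (seg (S.loc d p) ++ [S.role d p]) := by
    rw [applyOps_append, ← h.obj]; rfl
  set y := (win (S.loc d p)).getD (S.tm d p) with hy
  have hrgy : rg (S.loc d p) y ≠ none := by
    cases hw : win (S.loc d p) with
    | none => rw [hy, hw]; exact hrg
    | some x => rw [hy, hw]; exact (h.win_some _ _ hw).1
  have hhead : ∃ i τ, seg (S.loc d p) ++ [S.role d p] = i :: τ ∧ S.team i = y := by
    cases hw : win (S.loc d p) with
    | none =>
      rw [h.win_none _ hw, hy, hw]
      exact ⟨_, [], rfl, rfl⟩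
    | some x =>
      rw [hy, hw]
      rcases (h.win_some _ _ hw).2 with ⟨h1, -⟩ | ⟨i, τ, h1, h2⟩
      · refine ⟨S.role d p, [], by rw [h1]; rfl, ?_⟩
        by_contra hne
        refine hlose ?_ h1
        rw [hw]
        have : x ≠ S.tm d p := fun h => hne h.symm
        rw [Bool.eq_not_of_ne this]
      · exact ⟨i, τ ++ [S.role d p], by rw [h1]; rfl, h2⟩
  have hnd : (seg (S.loc d p) ++ [S.role d p]).Nodup := by
    refine List.Nodup.append (h.nodup _) (by simp) ?_
    intro a ha hb
    simp only [List.mem_singleton] at hb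
    exact hseg (hb ▸ ha)
  have hzQ : z ∈ S.Q y := by
    obtain ⟨i, τ, h1, h2⟩ := hhead
    rw [h1] at hz' hnd
    exact ⟨i, τ, h2, hnd, hz'⟩
  have hzu : ∀ r, r ∉ seg (S.loc d p) → r ≠ S.role d p → S.team r = (!y) → z ≠ S.u := by
    intro r hr hrp hrt hzeq
    refine S.disj (applyOps T S.o S.u [r]) y ?_ ⟨r, [], hrt, by simp, rfl⟩
    obtain ⟨i, τ, h1, h2⟩ := hhead
    refine ⟨i, τ ++ [r], h2, ?_, ?_⟩
    · rw [← List.cons_append, ← h1]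
      refine List.Nodup.append hnd (by simp) ?_
      intro a ha hb
      simp only [List.mem_singleton] at hb
      subst hb
      simp only [List.mem_append, List.mem_singleton] at ha
      exact ha.elim hr hrp
    · rw [← List.cons_append, ← h1, applyOps_append, ← hz', hzeq]
  let win' := Function.update win (S.loc d p) (some y)
  let seg' := Function.update seg (S.loc d p)
    (if z = S.u then [] else seg (S.loc d p) ++ [S.role d p])
  have hwself : win' (S.loc d p) = some y := by simp [win']
  have hwother : ∀ nd, nd ≠ S.loc d p → win' nd = win nd := by
    intro nd hne
    simp [win', hne]
  have hsself : seg' (S.loc d p) = if z = S.u then [] else seg (S.loc d p) ++ [S.role d p] := by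
    simp [seg']
  have hsother : ∀ nd, nd ≠ S.loc d p → seg' nd = seg nd := by
    intro nd hne
    simp [seg', hne]
  have hwm : ∀ nd x, win nd = some x → win' nd = some x := by
    intro nd x hx
    by_cases hnd : nd = S.loc d p
    · subst hnd; rw [hwself, hy, hx]; rfl
    · rw [hwother nd hnd, hx]
  have hsub : ∀ r, r ∉ seg (S.loc d p) → r ≠ S.role d p → r ∉ seg' (S.loc d p) := by
    intro r h1 h2
    rw [hsself]
    split_ifs
    · simp
    · simp [h1, h2]
  have hmono : ∀ {d p v}, Out S input rg win d p v → Out S input rg win' d p v :=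
    fun ho => ho.mono (fun _ _ _ h => h) hwm
  refine ⟨win', seg', ⟨fun nd => ?_, fun nd => ?_, fun nd hn => ?_, fun nd hn => ?_,
    fun nd x hx => ?_, fun nd x w hw => ?_, fun q => ?_⟩, hwm⟩
  · by_cases hnd : nd = S.loc d p
    · subst hnd
      rw [Function.update_self, hsself]
      split_ifs with hzu'
      · rw [hzu']; rfl
      · exact hz'
    · rw [Function.update_of_ne hnd, hsother nd hnd]; exact h.obj nd
  · by_cases hnd' : nd = S.loc d p
    · subst hnd'
      rw [hsself]
      split_ifs
      · simp
      · exact hnd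
    · rw [hsother nd hnd']; exact h.nodup nd
  · by_cases hnd : nd = S.loc d p
    · subst hnd
      rw [Function.update_self] at hn
      rw [hsself, if_pos hn]
    · rw [Function.update_of_ne hnd] at hn
      rw [hsother nd hnd]; exact h.fresh nd hn
  · by_cases hnd : nd = S.loc d p
    · subst hnd; rw [hwself] at hn; cases hn
    · rw [hwother nd hnd] at hn
      rw [hsother nd hnd]; exact h.win_none nd hn
  · by_cases hnd : nd = S.loc d p
    · subst hnd
      rw [hwself] at hx
      cases hx
      refine ⟨hrgy, ?_⟩
      rw [hsself]
      split_ifs with hzu'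
      · exact Or.inl ⟨rfl, hzu' ▸ hzQ⟩
      · exact Or.inr hhead
    · rw [hwother nd hnd] at hx
      rw [hsother nd hnd]; exact h.win_some nd x hx
  · obtain ⟨d', p', h1, h2, h3, h4⟩ := h.reg _ _ _ hw
    exact ⟨d', p', h1, h2, h3, hmono h4⟩
  · by_cases hq : q = p
    · subst hq
      rw [Function.update_self]
      refine ⟨hd, hmono hout, ?_⟩
      change win' (S.loc d q) ≠ none
      rw [hwself]; simp
    · rw [Function.update_of_ne hq]
      have hqc := h.proc q
      cases hs : ps q with
      | done w => rw [hs] at hqc; exact hmono hqc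
      | busy d' v' ph =>
        rw [hs] at hqc
        obtain ⟨h1, h2, h3⟩ := hqc
        refine ⟨h1, hmono h2, ?_⟩
        by_cases hnd : S.loc d' q = S.loc d p
        · have hnd' := hnd
          simp only [loc, Prod.mk.injEq] at hnd'
          obtain ⟨rfl, hpath⟩ := hnd'
          have hrole : S.role d' q ≠ S.role d' p := fun hr => hq (S.role_inj d' q p hpath hr)
          cases ph with
          | announce => trivial
          | look => exact h3
          | check =>
            obtain ⟨a1, a2, a3, a4⟩ := h3
            refine ⟨a1, ?_, a3, ?_⟩
            · rw [hnd] at a2 ⊢; exact hsub _ a2 hrole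
            · -- otherwise the recording process is of the same team, which has a single role
              rw [hnd] at a4 ⊢
              intro hx
              rw [hwself] at hx
              have hyq : y = S.tm d' q := Option.some.inj hx
              have hpy : S.tm d' p = y := by
                cases hw : win (S.loc d' p) with
                | none => rw [hy, hw]; rfl
                | some x =>
                  exfalso
                  apply a4
                  rw [← hyq, hy, hw]
                  rfl
              refine hrole (S.uniq _ a3 _ _ ?_ ?_)
              · rw [Bool.not_not]
              · rw [Bool.not_not]; exact hpy.trans hyq
          | record =>
            obtain ⟨a1, a2, a3⟩ := h3
            rw [hnd] at a2
            refine ⟨a1, ?_, fun hx => ?_⟩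
            · rw [hnd]; exact hsub _ a2 hrole
            · rw [hnd, hwself] at hx
              have hyq : S.team (S.role d' q) = !y := by
                rw [Option.some.inj hx, Bool.not_not]
              rw [hnd, hsself, if_neg (hzu _ a2 hrole hyq)]
              simp
          | relook =>
            change win' (S.loc d' q) ≠ none
            rw [hnd, hwself]; simp
          | fetch y => exact hwm _ _ h3
        · cases ph with
          | announce => trivial
          | look => exact h3
          | check => simpa only [PhC, hwother _ hnd, hsother _ hnd] using h3
          | record => simpa only [PhC, hwother _ hnd, hsother _ hnd] using h3
          | relook => simpa only [PhC, hwother _ hnd, hsother _ hnd] using h3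
          | fetch y => simpa only [PhC, hwother _ hnd, hsother _ hnd] using h3

end Setup

end RecoverableConsensus

namespace RecoverableConsensus

namespace Setup

variable {n : ℕ} {T : DetType} {S : Setup n T} {input : Fin n → Bool}

/-! ### Correctness of the tournament -/

/-- The invariant for a configuration. -/
abbrev GoodC (S : Setup n T) (input : Fin n → Bool) (win : Node → Option Bool)
    (seg : Node → List (Fin n)) (C : Config S.alg) : Prop :=
  Good S input (S.rg C) win seg (S.ps C) (S.ob C)

/-- The invariant is preserved by every event, and outcomes do not change. -/
lemma good_event {win : Node → Option Bool} {seg : Node → List (Fin n)} {C : Config S.alg}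
    (h : GoodC S input win seg C) (e : Event n) :
    ∃ win' seg', GoodC S input win' seg' (applyEvent S.alg input C e) ∧
      ∀ d p v, Out S input (S.rg C) win d p v →
        Out S input (S.rg (applyEvent S.alg input C e)) win' d p v := by
  classical
  -- events that change neither an object nor a register
  have quiet : ∀ e p s, S.ps (applyEvent S.alg input C e) = Function.update (S.ps C) p s →
      S.ob (applyEvent S.alg input C e) = S.ob C → S.rg (applyEvent S.alg input C e) = S.rg C →
      PC S input (S.rg C) win seg p s →
      ∃ win' seg', GoodC S input win' seg' (applyEvent S.alg input C e) ∧
        ∀ d p v, Out S input (S.rg C) win d p v →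
          Out S input (S.rg (applyEvent S.alg input C e)) win' d p v := by
    intro e p s h1 h2 h3 hs
    refine ⟨win, seg, ?_, ?_⟩
    · rw [GoodC, h1, h2, h3]
      exact h.update hs
    · rw [h3]
      exact fun _ _ _ ho => ho
  cases e with
  | crash p =>
    obtain ⟨h1, h2, h3⟩ := crash_eq input C p
    refine quiet _ _ _ h1 h2 h3 ?_
    have hn : 0 < n := p.pos
    exact ⟨by omega, Or.inl ⟨by omega, rfl⟩, trivial⟩
  | step p =>
    have hpc := h.proc p
    cases hs : S.ps C p with
    | done w =>
      have hnone : S.alg.pending p (C.pstate p) = none := by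
        change S.pend p (S.ps C p) = none
        rw [hs]; rfl
      rw [applyEvent_none input hnone]
      exact ⟨win, seg, h, fun _ _ _ ho => ho⟩
    | busy d v ph =>
      rw [hs] at hpc
      obtain ⟨hd, hout, hph⟩ := hpc
      cases ph with
      | announce =>
        have hp : S.pend p (S.ps C p) =
            some ⟨(S.loc d p, some (S.tm d p)), (some (some v) : Option (Option Bool))⟩ := by
          rw [hs]; rfl
        obtain ⟨h1, h2, h3⟩ := step_reg input hp
        obtain ⟨g1, g2⟩ := h.announce hs
        have h3' : S.rg (applyEvent S.alg input C (.step p)) = Function.update (S.rg C) (S.loc d p)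
            (Function.update (S.rg C (S.loc d p)) (S.tm d p) (some v)) := by
          rw [h3]
          funext nd x
          simp [Function.update_apply]
        refine ⟨win, seg, ?_, ?_⟩
        · rw [GoodC, h1, h2, h3', hs]
          exact g1
        · rw [h3']
          exact fun _ _ _ ho => ho.mono g2 (fun _ _ h => h)
      | look =>
        have hp : S.pend p (S.ps C p) = some ⟨(S.loc d p, none), S.read⟩ := by rw [hs]; rfl
        obtain ⟨h1, h2, h3⟩ := step_look input hp
        refine quiet _ _ _ h1 h2 h3 ?_
        rw [hs]
        simp only [nextT]
        split_ifs with hu hQ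
        · have hob : S.ob C (S.loc d p) = S.u := S.ι_inj hu
          have hseg := h.fresh _ hob
          refine ⟨hd, hout, hph, by rw [hseg]; simp, hQ, fun hw => ?_⟩
          have hm := h.ob_mem hw
          rw [hob] at hm
          exact S.disj _ _ hm hQ
        · have hob : S.ob C (S.loc d p) = S.u := S.ι_inj hu
          have hseg := h.fresh _ hob
          refine ⟨hd, hout, hph, by rw [hseg]; simp, fun hw => ?_⟩
          have hm := h.ob_mem hw
          rw [hob] at hm
          exact absurd hm hQ
        · have hob : S.ob C (S.loc d p) ≠ S.u := fun h => hu (by rw [h])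
          refine ⟨hd, hout, ?_⟩
          change win (S.loc d p) = some _
          cases hw : win (S.loc d p) with
          | none =>
            exfalso
            apply hob
            rw [h.obj, h.win_none _ hw]
            rfl
          | some x => rw [h.cls_eq hw]
      | check =>
        have hp : S.pend p (S.ps C p) =
            some ⟨(S.loc d p, some (!S.tm d p)), (none : Option (Option Bool))⟩ := by rw [hs]; rfl
        obtain ⟨h1, h2, h3⟩ := step_read input hp
        cases hr : S.rg C (S.loc d p) (!S.tm d p) with
        | none =>
          refine quiet _ _ _ h1 h2 h3 ?_
          rw [hs, hr]
          obtain ⟨a1, a2, a3, a4⟩ := hph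
          exact ⟨hd, hout, a1, a2, fun hw => absurd hr (h.win_some _ _ hw).1⟩
        | some w =>
          obtain ⟨g1, g2⟩ := h.concede hs hr
          refine ⟨Function.update win (S.loc d p) (some (!S.tm d p)), seg, ?_, ?_⟩
          · rw [GoodC, h1, h2, h3, hs, hr]
            exact g1
          · rw [h3]
            exact fun _ _ _ ho => ho.mono (fun _ _ _ h => h) g2
      | record =>
        have hp : S.pend p (S.ps C p) = some ⟨(S.loc d p, none), S.o (S.role d p)⟩ := by
          rw [hs]; rfl
        obtain ⟨h1, h2, h3⟩ := step_obj input hp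
        obtain ⟨win', seg', g1, g2⟩ := h.record hs
        refine ⟨win', seg', ?_, ?_⟩
        · rw [GoodC, h1, h2, h3, hs]
          simp only [nextT]
          convert g1
        · rw [h3]
          exact fun _ _ _ ho => ho.mono (fun _ _ _ h => h) g2
      | relook =>
        have hp : S.pend p (S.ps C p) = some ⟨(S.loc d p, none), S.read⟩ := by rw [hs]; rfl
        obtain ⟨h1, h2, h3⟩ := step_look input hp
        refine quiet _ _ _ h1 h2 h3 ?_
        rw [hs]
        refine ⟨hd, hout, ?_⟩
        change win (S.loc d p) = some _
        obtain ⟨x, hw⟩ := Option.ne_none_iff_exists'.1 hph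
        rw [h.cls_eq hw, hw]
      | fetch y =>
        have hp : S.pend p (S.ps C p) =
            some ⟨(S.loc d p, some y), (none : Option (Option Bool))⟩ := by rw [hs]; rfl
        obtain ⟨h1, h2, h3⟩ := step_read input hp
        refine quiet _ _ _ h1 h2 h3 ?_
        obtain ⟨w, hw⟩ := Option.ne_none_iff_exists'.1 (h.win_some _ _ hph).1
        rw [hs, hw]
        exact pc_ret hd (Or.inr ⟨hd, y, hph, hw⟩)

lemma good_init (S : Setup n T) (input : Fin n → Bool) :
    GoodC S input (fun _ => none) (fun _ => []) (initConfig S.alg input) where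
  obj _ := rfl
  nodup _ := List.nodup_nil
  fresh _ _ := rfl
  win_none _ _ := rfl
  win_some _ _ h := nomatch h
  reg _ _ _ h := nomatch h
  proc p := by
    have hn : 0 < n := p.pos
    exact ⟨by omega, Or.inl ⟨by omega, rfl⟩, trivial⟩

/-- Decided values are outcomes at the root. -/
lemma good_run (S : Setup n T) (input : Fin n → Bool) (σ : List (Event n)) :
    ∃ win seg, GoodC S input win seg (run S.alg input (initConfig S.alg input) σ) ∧
      ∀ i v, HasDecided S.alg input (initConfig S.alg input) σ i v →
        Out S input (S.rg (run S.alg input (initConfig S.alg input) σ)) win 0 i v := by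
  have now : ∀ {win seg C} i v, GoodC S input win seg C → S.alg.output i (C.pstate i) = some v →
      Out S input (S.rg C) win 0 i v := by
    intro win seg C i v h hv
    have hpc := h.proc i
    cases hs : S.ps C i with
    | done w =>
      have hs' : C.pstate i = St.done w := hs
      rw [hs'] at hv
      cases hv
      rw [hs] at hpc
      exact hpc
    | busy d w ph =>
      have hs' : C.pstate i = St.busy d w ph := hs
      rw [hs'] at hv
      cases hv
  induction σ using List.reverseRecOn with
  | nil =>
    refine ⟨_, _, good_init S input, fun i v ⟨τ, hτ, hv⟩ => ?_⟩
    rw [List.prefix_nil.1 hτ] at hv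
    exact now i v (good_init S input) hv
  | append_singleton σ e ih =>
    obtain ⟨win, seg, hg, hd⟩ := ih
    obtain ⟨win', seg', hg', ho⟩ := good_event hg e
    have hrun : run S.alg input (initConfig S.alg input) (σ ++ [e]) =
        applyEvent S.alg input (run S.alg input (initConfig S.alg input) σ) e := by
      rw [run_append]; rfl
    rw [hrun]
    refine ⟨win', seg', hg', fun i v ⟨τ, hτ, hv⟩ => ?_⟩
    rcases List.prefix_concat_iff.1 hτ with rfl | hτ'
    · rw [hrun] at hv
      exact now i v hg' hv
    · exact ho _ _ _ (hd i v ⟨τ, hτ', hv⟩)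

lemma agreement (S : Setup n T) : Agreement S.alg := by
  intro input σ i j v w hv hw
  obtain ⟨win, seg, -, h⟩ := good_run S input σ
  exact ((h i v hv).congr (S.path_zero i j)).unique (h j w hw)

lemma validity (S : Setup n T) : Validity S.alg := by
  intro input σ i v hv
  obtain ⟨win, seg, hg, h⟩ := good_run S input σ
  exact hg.out_input (Nat.zero_le n) (h i v hv)

/-- The rank of a phase at a node: the larger, the more phases may follow. -/
def rank : Phase → ℕ
  | .announce => 6
  | .look => 5
  | .check => 4
  | .record => 3
  | .relook => 2
  | .fetch _ => 1

/-- An upper bound for the number of steps until a decision. -/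
def stepBound : St → ℕ
  | .done _ => 0
  | .busy d _ ph => 8 * d + rank ph + 1

lemma stepBound_ret (d : ℕ) (w : Bool) : stepBound (ret d w) ≤ 8 * d := by
  cases d with
  | zero => exact le_refl _
  | succ d => simp only [ret, stepBound, rank]; omega

lemma stepBound_step (C : Config S.alg) (p : Fin n) :
    stepBound (S.ps C p) = 0 ∨
    stepBound (S.ps (applyEvent S.alg input C (.step p)) p) < stepBound (S.ps C p) := by
  cases hs : S.ps C p with
  | done w => exact Or.inl rfl
  | busy d v ph =>
    right
    cases ph with
    | announce =>
      have hp : S.pend p (S.ps C p) =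
          some ⟨(S.loc d p, some (S.tm d p)), (some (some v) : Option (Option Bool))⟩ := by
        rw [hs]; rfl
      rw [(step_reg input hp).1, Function.update_self, hs]
      simp [nextR, stepBound, rank]
    | look =>
      have hp : S.pend p (S.ps C p) = some ⟨(S.loc d p, none), S.read⟩ := by rw [hs]; rfl
      rw [(step_look input hp).1, Function.update_self, hs]
      simp only [nextT]
      split_ifs <;> simp [stepBound, rank]
    | check =>
      have hp : S.pend p (S.ps C p) =
          some ⟨(S.loc d p, some (!S.tm d p)), (none : Option (Option Bool))⟩ := by rw [hs]; rfl
      rw [(step_read input hp).1, Function.update_self, hs]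
      cases S.rg C (S.loc d p) (!S.tm d p) with
      | none => simp [nextR, stepBound, rank]
      | some w =>
        change stepBound (ret d w) < 8 * d + 4 + 1
        exact (stepBound_ret d w).trans_lt (by omega)
    | record =>
      have hp : S.pend p (S.ps C p) = some ⟨(S.loc d p, none), S.o (S.role d p)⟩ := by rw [hs]; rfl
      rw [(step_obj input hp).1, Function.update_self, hs]
      simp [nextT, stepBound, rank]
    | relook =>
      have hp : S.pend p (S.ps C p) = some ⟨(S.loc d p, none), S.read⟩ := by rw [hs]; rfl
      rw [(step_look input hp).1, Function.update_self, hs]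
      simp [nextT, stepBound, rank]
    | fetch y =>
      have hp : S.pend p (S.ps C p) =
          some ⟨(S.loc d p, some y), (none : Option (Option Bool))⟩ := by rw [hs]; rfl
      rw [(step_read input hp).1, Function.update_self, hs]
      change stepBound (ret d _) < 8 * d + 1 + 1
      exact (stepBound_ret d _).trans_lt (by omega)

lemma recWaitFree (S : Setup n T) : RecWaitFree S.alg := by
  intro input C e i _ hinf ⟨m, hm⟩
  let M : ℕ → ℕ := fun k => stepBound (S.ps (run S.alg input C (initSeg e k)) i)
  have hrun : ∀ k, run S.alg input C (initSeg e (k + 1)) =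
      applyEvent S.alg input (run S.alg input C (initSeg e k)) (e k) := by
    intro k
    rw [initSeg, List.range_succ, List.map_append, run_append]
    rfl
  have hstep : ∀ k, e k = .step i → M k = 0 ∨ M (k + 1) < M k := by
    intro k hk
    simp only [M, hrun, hk]
    exact stepBound_step _ _
  have hle : ∀ k, m ≤ k → M (k + 1) ≤ M k := by
    intro k hk
    by_cases hi : (e k).proc = i
    · cases he : e k with
      | crash j =>
        rw [he] at hi
        exact absurd (by rw [he, ← hi]; rfl) (hm k hk)
      | step j =>
        rw [he] at hi
        have hj : e k = .step i := by rw [he, ← hi]; rfl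
        rcases hstep k hj with h | h
        · have : S.alg.pending i ((run S.alg input C (initSeg e k)).pstate i) = none := by
            change S.pend i (S.ps (run S.alg input C (initSeg e k)) i) = none
            cases hs : S.ps (run S.alg input C (initSeg e k)) i with
            | done w => rfl
            | busy d v ph =>
              simp only [M, hs, stepBound] at h
              omega
          simp only [M, hrun, hj]
          rw [applyEvent_none input this]
        · exact h.le
    · have : S.ps (run S.alg input C (initSeg e (k + 1))) i =
          S.ps (run S.alg input C (initSeg e k)) i := by
        rw [hrun]
        exact applyEvent_pstate_ne input hi
      simp only [M, this, le_refl]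
  have hanti : ∀ k l, m ≤ k → k ≤ l → M l ≤ M k := by
    intro k l hk hkl
    induction l, hkl using Nat.le_induction with
    | base => exact le_refl _
    | succ l hl ih => exact (hle l (hk.trans hl)).trans ih
  have hzero : ∀ N k, m ≤ k → M k ≤ N → ∃ l, M l = 0 := by
    intro N
    induction N with
    | zero => exact fun k _ h => ⟨k, by omega⟩
    | succ N ih =>
      intro k hk hN
      obtain ⟨l, hl, hel⟩ := hinf k
      rcases hstep l hel with h | h
      · exact ⟨l, h⟩
      · have := hanti k l hk hl
        exact ih (l + 1) (by omega) (by omega)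
  obtain ⟨l, hl⟩ := hzero _ m le_rfl le_rfl
  refine ⟨l, ?_⟩
  cases hs : S.ps (run S.alg input C (initSeg e l)) i with
  | done w =>
    have hs' : (run S.alg input C (initSeg e l)).pstate i = St.done w := hs
    rw [hs']
    exact ⟨w, rfl⟩
  | busy d v ph =>
    simp only [M, hs, stepBound] at hl
    omega

lemma recConsensusNumberGe (S : Setup n T) : RecConsensusNumberGe n T := by
  refine ⟨S.alg, ?_, S.agreement, S.validity, S.recWaitFree⟩
  rintro ⟨nd, _ | x⟩
  · exact Or.inl rfl
  · exact Or.inr ⟨Option Bool, rfl⟩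

end Setup

end RecoverableConsensus

namespace RecoverableConsensus

/-! ### Construction of a tournament -/

variable {n : ℕ}

/-- Any two processes can be assigned roles on different teams. -/
lemma exists_roles {team : Fin n → Bool} (hboth : ∀ x : Bool, ∃ i, team i = x)
    (s : Finset (Fin n)) :
    ∃ ρ : Equiv.Perm (Fin n), 1 < s.card → ∀ x : Bool, ∃ i ∈ s, team (ρ i) = x := by
  by_cases hs : 1 < s.card
  · obtain ⟨a, ha, b, hb, hab⟩ := Finset.one_lt_card.1 hs
    obtain ⟨i₀, h0⟩ := hboth false
    obtain ⟨i₁, h1⟩ := hboth true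
    have h01 : i₀ ≠ i₁ := by
      rintro rfl
      rw [h0] at h1
      cases h1
    set τ := Equiv.swap a i₀ with hτ
    have hτa : τ a = i₀ := Equiv.swap_apply_left _ _
    have hτb : i₀ ≠ τ b := fun h => hab (τ.injective (hτa.trans h))
    refine ⟨τ.trans (Equiv.swap (τ b) i₁), fun _ x => ?_⟩
    cases x with
    | false =>
      refine ⟨a, ha, ?_⟩
      rw [Equiv.trans_apply, hτa, Equiv.swap_apply_of_ne_of_ne hτb h01, h0]
    | true =>
      refine ⟨b, hb, ?_⟩
      rw [Equiv.trans_apply, Equiv.swap_apply_left, h1]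
  · exact ⟨Equiv.refl _, fun h => absurd h hs⟩

/-- The way of a process from the root to its leaf, if `ρ s` assigns the roles at a node that is
visited by the set `s` of processes. The last turn is the head of the list. -/
def treePath (team : Fin n → Bool) (ρ : Finset (Fin n) → Equiv.Perm (Fin n)) :
    ℕ → Fin n → List Bool
  | 0, _ => []
  | d + 1, p => team (ρ (Finset.univ.filter fun q => treePath team ρ d q = treePath team ρ d p) p) ::
      treePath team ρ d p

/-- The processes visiting the node of `p` at depth `d`. -/
def visitors (team : Fin n → Bool) (ρ : Finset (Fin n) → Equiv.Perm (Fin n)) (d : ℕ) (p : Fin n) :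
    Finset (Fin n) :=
  Finset.univ.filter fun q => treePath team ρ d q = treePath team ρ d p

lemma treePath_succ (team : Fin n → Bool) (ρ : Finset (Fin n) → Equiv.Perm (Fin n)) (d : ℕ)
    (p : Fin n) :
    treePath team ρ (d + 1) p = team (ρ (visitors team ρ d p) p) :: treePath team ρ d p := rfl

lemma visitors_congr {team : Fin n → Bool} {ρ : Finset (Fin n) → Equiv.Perm (Fin n)} {d : ℕ}
    {p q : Fin n} (h : treePath team ρ d p = treePath team ρ d q) :
    visitors team ρ d p = visitors team ρ d q := by
  simp only [visitors, h]

lemma mem_visitors {team : Fin n → Bool} {ρ : Finset (Fin n) → Equiv.Perm (Fin n)} {d : ℕ}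
    {p q : Fin n} : q ∈ visitors team ρ d p ↔ treePath team ρ d q = treePath team ρ d p := by
  simp [visitors]

/-- At each node visited by several processes, some of them leave the way of `p`. -/
lemma card_visitors {team : Fin n → Bool} {ρ : Finset (Fin n) → Equiv.Perm (Fin n)}
    (hρ : ∀ s : Finset (Fin n), 1 < s.card → ∀ x : Bool, ∃ i ∈ s, team (ρ s i) = x) (d : ℕ)
    (p : Fin n) :
    (visitors team ρ d p).card = 1 ∨ (visitors team ρ d p).card + d ≤ n := by
  induction d with
  | zero =>
    right
    simpa using Finset.card_le_univ (visitors team ρ 0 p)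
  | succ d ih =>
    have hsub : visitors team ρ (d + 1) p ⊆ visitors team ρ d p := by
      intro q hq
      rw [mem_visitors, treePath_succ, treePath_succ] at hq
      rw [mem_visitors]
      exact (List.cons.inj hq).2
    have hpos : ∀ d, 0 < (visitors team ρ d p).card :=
      fun d => Finset.card_pos.2 ⟨p, mem_visitors.2 rfl⟩
    by_cases h1 : 1 < (visitors team ρ d p).card
    · right
      obtain ⟨i, hi, hti⟩ := hρ _ h1 (!team (ρ (visitors team ρ d p) p))
      have hi' : i ∉ visitors team ρ (d + 1) p := by
        intro hmem
        rw [mem_visitors, treePath_succ, treePath_succ, visitors_congr (mem_visitors.1 hi)] at hmem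
        have := (List.cons.inj hmem).1
        rw [hti] at this
        simp at this
      have := Finset.card_lt_card (Finset.ssubset_iff_subset_ne.2
        ⟨hsub, fun heq => hi' (heq ▸ hi)⟩)
      omega
    · left
      have := Finset.card_le_card hsub
      have := hpos (d + 1)
      omega

lemma exists_setup {T : DetType} (hread : Readable T) (h : NRecording n T) :
    Nonempty (Setup n T) := by
  obtain ⟨read, ι, hι, hδ⟩ := hread
  obtain ⟨u, team, o, hboth, hdisj, huniq⟩ := h
  choose ρ hρ using exists_roles hboth
  have hdisj' : ∀ z, z ∈ UVals T o u team false → z ∈ UVals T o u team true → False :=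
    fun z h1 h2 => Set.notMem_empty z (hdisj ▸ ⟨h1, h2⟩)
  exact ⟨{
    read := read
    ι := ι
    ι_inj := hι
    δ_read := hδ
    u := u
    team := team
    o := o
    disj := fun z x h1 h2 => by
      cases x with
      | false => exact hdisj' z h1 h2
      | true => exact hdisj' z h2 h1
    uniq := fun x hx i j hi hj => (huniq x hx).unique hi hj
    path := treePath team ρ
    role := fun d p => ρ (visitors team ρ d p) p
    path_zero := fun _ _ => rfl
    role_inj := fun d p q h1 h2 => by
      rw [visitors_congr h1] at h2
      exact (ρ _).injective h2
    path_succ := fun d p q h1 h2 => by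
      rw [treePath_succ, treePath_succ, h2, h1]
    path_last := fun p q hpq => by
      have hp : p ∈ visitors team ρ n q := mem_visitors.2 hpq
      have hq : q ∈ visitors team ρ n q := mem_visitors.2 rfl
      have hcard : (visitors team ρ n q).card ≤ 1 := by
        rcases card_visitors hρ n q with h | h <;> omega
      exact Finset.card_le_one.1 hcard p hp q hq }⟩

end RecoverableConsensus

open RecoverableConsensus in
/-- If there exists a recoverable wait-free binary consensus algorithm for
`n > 1` processes using objects of deterministic readable types `𝒯_0, 𝒯_1, 𝒯_2, …` together
with registers, then at least one of the types `𝒯_k` has recoverable consensus number at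
least `n`; i.e. the recoverable consensus hierarchy is robust for deterministic readable
types. -/
theorem recoverable_hierarchy_robust_for_readable
    (n : ℕ) (hn : 1 < n) (T : ℕ → DetType) (hread : ∀ k : ℕ, Readable (T k))
    (A : Algorithm n)
    (hT : ∀ o : A.ObjIdx, (∃ k : ℕ, A.objType o = T k) ∨ IsRegister (A.objType o))
    (hA : SolvesRecConsensus A) :
    ∃ k : ℕ, RecConsensusNumberGe n (T k) := by
  obtain ⟨hAg, hV, hW⟩ := hA
  obtain ⟨O, hO⟩ := exists_recording hn hAg hV hW
  rcases hT O with ⟨k, hk⟩ | ⟨V, hV'⟩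
  · rw [hk] at hO
    obtain ⟨S⟩ := exists_setup (hread k) hO
    exact ⟨k, S.recConsensusNumberGe⟩
  · rw [hV'] at hO
    exact absurd hO (not_recording_register V)
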